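/- There exists a sequence of reals t_k with t_k → 0 as k → ∞ such that for every integer k ≥ 3 and every real c with 0 < c < 2^(k-1)·ln 2 − (ln 2)/2 − (1 + t_k)/2, the probability that a random k-uniform hypergraph H_k(n, m) with m = ⌊cn⌋ hyperedges is 2-colorable tends to 1 as n → ∞. -/

import Mathlib

/-- A hypergraph (a set of hyperedges on vertex set `Fin n`) is 2-colorable if the
vertices can be 2-colored so that no hyperedge is monochromatic. -/
def IsTwoColorable {n : ℕ} (H : Finset (Finset (Fin n))) : Prop :=
  ∃ σ : Fin n → Bool, ∀ e ∈ H, (∃ v ∈ e, σ v = true) ∧ (∃ v ∈ e, σ v = false)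

/-!
Edges are taken as tuples of `k` vertices with repetition, and only balanced colourings of an even
number `N` of vertices are counted. When the edges are exposed one at a time, the number of
solutions divided by its mean is a martingale, and the relative variance of one step is governed by
the overlaps of pairs of solutions. As long as few pairs have an overlap above `N ^ (-3 / 8)`, the
expected inverse of this ratio grows by a factor `1 + O(N ^ (-3 / 4))` per edge, so after linearly
many edges the ratio is at least `exp (-O(N ^ (1 / 4)))` with high probability. The number of pairs
of solutions with a larger overlap is controlled by its expectation, which up to the threshold is
smaller than the square of the mean number of solutions by a factor `exp (-Ω(N ^ (1 / 4)))`. Hence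
solutions survive with high probability, and no sharp threshold theorem is needed. Finally, a random
sequence of `m = O(n)` tuples consists of `m` distinct `k`-sets with probability bounded away from
`0`, and conditionally on this it is a uniformly random hypergraph.
-/

namespace HypergraphColoring

open Finset Filter Topology
open scoped BigOperators Classical

noncomputable section

section Probability

variable {α : Type*} [Fintype α] {P Q : α → Prop}

/-- The probability of the event `P` at a uniformly random point of a finite type. -/
def prob (P : α → Prop) : ℝ := 𝔼 a, if P a then 1 else 0

theorem prob_eq_expect (P : α → Prop) [DecidablePred P] :
    prob P = 𝔼 a, if P a then 1 else 0 := by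
  rw [prob]
  congr!

theorem prob_eq_card_div (P : α → Prop) : prob P = #{a | P a} / Fintype.card α := by
  rw [prob, Fintype.expect_eq_sum_div_card, sum_boole]

theorem prob_and_eq_expect (P Q : α → Prop) :
    prob (fun a => P a ∧ Q a) = 𝔼 a, (if P a then 1 else 0) * if Q a then 1 else 0 := by
  simp_rw [ite_zero_mul_ite_zero, mul_one]
  exact prob_eq_expect _

theorem prob_nonneg (P : α → Prop) : 0 ≤ prob P :=
  expect_nonneg fun a _ => by split_ifs <;> norm_num

theorem prob_mono (h : ∀ a, P a → Q a) : prob P ≤ prob Q :=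
  expect_le_expect fun a _ => by
    by_cases hP : P a
    · simp [hP, h a hP]
    · rw [if_neg hP]; split_ifs <;> norm_num

theorem prob_or_le (P Q : α → Prop) : prob (fun a => P a ∨ Q a) ≤ prob P + prob Q := by
  rw [prob, prob, prob, ← expect_add_distrib]
  refine expect_le_expect fun a _ => ?_
  by_cases hP : P a <;> by_cases hQ : Q a <;> simp [hP, hQ]

theorem prob_le_expect_div {f : α → ℝ} {c : ℝ} (hf : ∀ a, 0 ≤ f a) (hc : 0 < c)
    (h : ∀ a, P a → c ≤ f a) : prob P ≤ (𝔼 a, f a) / c := by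
  rw [prob, expect_div]
  refine expect_le_expect fun a _ => ?_
  split_ifs with hP
  · exact (one_le_div hc).2 (h a hP)
  · exact div_nonneg (hf a) hc.le

theorem expect_snoc {E : Type*} [Fintype E] (s : ℕ) (f : (Fin (s + 1) → E) → ℝ) :
    𝔼 h, f h = 𝔼 h : Fin s → E, 𝔼 e, f (Fin.snoc h e) := by
  rw [← Fintype.expect_equiv (Fin.snocEquiv fun _ : Fin (s + 1) => E)
    (fun x => f (Fin.snoc x.2 x.1)) f fun _ => rfl, ← univ_product_univ, expect_product,
    expect_comm]

theorem prob_init {E : Type*} [Fintype E] [Nonempty E] (s : ℕ) (P : (Fin s → E) → Prop) :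
    prob (fun h : Fin (s + 1) → E => P (Fin.init h)) = prob P := by
  simp only [prob, expect_snoc, Fin.init_snoc, Fintype.expect_const]

theorem expect_sq_expect {B : Type*} (S : Finset B) (f : B → α → ℝ) :
    𝔼 a, (𝔼 σ ∈ S, f σ a) ^ 2 = 𝔼 σ ∈ S, 𝔼 τ ∈ S, 𝔼 a, f σ a * f τ a := by
  simp_rw [sq, expect_mul_expect]
  rw [expect_comm]
  exact expect_congr rfl fun σ _ => expect_comm _ _ _

theorem expect_prod_comp {ι V : Type*} [Fintype ι] [DecidableEq ι] [Fintype V] [Nonempty V]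
    (I : Finset ι) (f : V → ℝ) : 𝔼 e : ι → V, ∏ i ∈ I, f (e i) = (𝔼 v, f v) ^ #I := by
  have extend (e : ι → V) : ∏ i ∈ I, f (e i) = ∏ i, if i ∈ I then f (e i) else 1 := by
    rw [prod_ite_mem, univ_inter]
  have factor (i : ι) : ∑ v, (if i ∈ I then f v else 1) =
      Fintype.card V * if i ∈ I then 𝔼 v, f v else 1 := by
    split_ifs
    · rw [Fintype.card_mul_expect]
    · simp
  simp_rw [extend]
  rw [Fintype.expect_eq_sum_div_card, ← Fintype.prod_sum fun i v => if i ∈ I then f v else 1]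
  simp_rw [factor]
  rw [prod_mul_distrib, prod_const, prod_ite_mem, univ_inter, prod_const, Fintype.card_fun,
    card_univ, Nat.cast_pow, mul_div_cancel_left₀ _ (by positivity)]

end Probability

/-- A uniformly random sequence of constraints in `E` imposed one after the other on the
assignments in `start`. Each constraint is satisfied (`ok`) by each assignment with probability
`p`; `heavy` marks the pairs of assignments that are too correlated. The number of solutions after
`s` constraints is measured relative to its mean `#start * p ^ s`, and the solutions are regarded
as typical while there are at least `μ` times that many of them and at most `τ` times its square
heavy pairs among them. -/
structure Exposure (B E : Type*) where
  ok : B → E → Prop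
  start : Finset B
  heavy : B → B → Prop
  p : ℝ
  τ : ℝ
  μ : ℝ

namespace Exposure

variable {B E : Type*} (X : Exposure B E)

/-- The assignments in `S` satisfying the constraint `e`. -/
def survivors (S : Finset B) (e : E) : Finset B := {σ ∈ S | X.ok σ e}

/-- The assignments satisfying all constraints of the sequence `h`. -/
def solutions {s : ℕ} (h : Fin s → E) : Finset B := {σ ∈ X.start | ∀ i, X.ok σ (h i)}

/-- The ordered pairs of highly correlated assignments in `S`. -/
def heavyPairs (S : Finset B) : Finset (B × B) := {x ∈ S ×ˢ S | X.heavy x.1 x.2}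

/-- The mean number of solutions of `s` random constraints. -/
def meanSize (s : ℕ) : ℝ := #X.start * X.p ^ s

/-- The number of assignments in `S` relative to the mean number of solutions at time `s`. -/
def relSize (s : ℕ) (S : Finset B) : ℝ := #S / X.meanSize s

/-- Heavy pairs are a negligible proportion of the pairs in `S`. The proportion `τ / μ ^ 2` is what
typicality at any time guarantees. -/
def IsSpread (S : Finset B) : Prop := (#(X.heavyPairs S) : ℝ) ≤ X.τ / X.μ ^ 2 * #S ^ 2

/-- At time `s`, the set `S` of solutions is not too small and has few heavy pairs. -/
def IsTypical (s : ℕ) (S : Finset B) : Prop :=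
  (#(X.heavyPairs S) : ℝ) ≤ X.τ * X.meanSize s ^ 2 ∧ X.μ ≤ X.relSize s S

/-- The constraint `e` eliminates more than nine tenths of the expected number of survivors. -/
def Collapses (S : Finset B) (e : E) : Prop := (#(X.survivors S e) : ℝ) < X.p / 10 * #S

/-- Until the end of `h`, the solutions were typical and no constraint made them collapse.
The solutions at the final time need not be typical. -/
def IsTame : (s : ℕ) → (Fin s → E) → Prop
  | 0, _ => True
  | s + 1, h => IsTame s (Fin.init h) ∧ X.IsTypical s (X.solutions (Fin.init h)) ∧
      ¬ X.Collapses (X.solutions (Fin.init h)) (h (Fin.last s))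

theorem solutions_subset {s : ℕ} (h : Fin s → E) : X.solutions h ⊆ X.start :=
  filter_subset _ _

theorem solutions_zero (h : Fin 0 → E) : X.solutions h = X.start := by
  simp [solutions]

theorem solutions_snoc {s : ℕ} (h : Fin s → E) (e : E) :
    X.solutions (Fin.snoc h e : Fin (s + 1) → E) = X.survivors (X.solutions h) e := by
  ext σ
  simp [solutions, survivors, Fin.forall_fin_succ', and_assoc]

theorem isTame_snoc {s : ℕ} (h : Fin s → E) (e : E) :
    X.IsTame (s + 1) (Fin.snoc h e) ↔ X.IsTame s h ∧ X.IsTypical s (X.solutions h) ∧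
      ¬ X.Collapses (X.solutions h) e := by
  simp only [IsTame, Fin.init_snoc, Fin.snoc_last]

theorem relSize_survivors (s : ℕ) {S : Finset B} (hS : S.Nonempty) (e : E) :
    X.relSize (s + 1) (X.survivors S e) =
      X.relSize s S * (#(X.survivors S e) / (X.p * #S)) := by
  have : (#S : ℝ) ≠ 0 := by exact_mod_cast hS.card_pos.ne'
  rw [relSize, relSize, meanSize, meanSize, pow_succ]
  field_simp

/-- One random constraint acts on every spread set of assignments with relative variance at
most `V`, and makes it collapse with probability at most `β`. -/
structure StepBounds [Fintype E] (V β : ℝ) : Prop where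
  start_nonempty : X.start.Nonempty
  p_pos : 0 < X.p
  τ_pos : 0 < X.τ
  μ_pos : 0 < X.μ
  V_nonneg : 0 ≤ V
  β_nonneg : 0 ≤ β
  prob_ok : ∀ σ ∈ X.start, prob (X.ok σ) = X.p
  variance_le : ∀ S ⊆ X.start, S.Nonempty → X.IsSpread S →
    𝔼 e, ((#(X.survivors S e) : ℝ) / (X.p * #S) - 1) ^ 2 ≤ V
  prob_collapses_le : ∀ S ⊆ X.start, S.Nonempty → X.IsSpread S → prob (X.Collapses S) ≤ β

theorem inv_le_one_sub_add_sq {x : ℝ} (hx : 1 / 10 ≤ x) :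
    x⁻¹ ≤ 1 - (x - 1) + 10 * (x - 1) ^ 2 := by
  rw [inv_le_iff_one_le_mul₀ (by linarith)]
  nlinarith [mul_nonneg (sq_nonneg (x - 1)) (by linarith : 0 ≤ 10 * x - 1)]

namespace StepBounds

variable {X} [Fintype E] {V β : ℝ} (hX : X.StepBounds V β)
include hX

theorem meanSize_pos (s : ℕ) : 0 < X.meanSize s :=
  mul_pos (by exact_mod_cast hX.start_nonempty.card_pos) (pow_pos hX.p_pos s)

theorem relSize_nonneg (s : ℕ) (S : Finset B) : 0 ≤ X.relSize s S :=
  div_nonneg (Nat.cast_nonneg _) (hX.meanSize_pos s).le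

theorem relSize_pos (s : ℕ) {S : Finset B} (hS : S.Nonempty) : 0 < X.relSize s S :=
  div_pos (by exact_mod_cast hS.card_pos) (hX.meanSize_pos s)

theorem nonempty_of_isTypical {s : ℕ} {S : Finset B} (hS : X.IsTypical s S) : S.Nonempty := by
  by_contra hempty
  have : X.μ ≤ 0 := by simpa [relSize, not_nonempty_iff_eq_empty.1 hempty] using hS.2
  exact this.not_gt hX.μ_pos

theorem isSpread_of_isTypical {s : ℕ} {S : Finset B} (hS : X.IsTypical s S) : X.IsSpread S := by
  have hμ := hX.μ_pos
  have hτ := hX.τ_pos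
  have hmean := hX.meanSize_pos s
  have hcard : X.μ * X.meanSize s ≤ #S := (le_div_iff₀ hmean).1 hS.2
  calc (#(X.heavyPairs S) : ℝ) ≤ X.τ * X.meanSize s ^ 2 := hS.1
    _ = X.τ / X.μ ^ 2 * (X.μ * X.meanSize s) ^ 2 := by field_simp
    _ ≤ X.τ / X.μ ^ 2 * #S ^ 2 := by gcongr

theorem nonempty_of_isTame : ∀ {s : ℕ} {h : Fin s → E}, X.IsTame s h → (X.solutions h).Nonempty
  | 0, h, _ => by simpa only [solutions_zero] using hX.start_nonempty
  | s + 1, h, ⟨_, htypical, hcollapse⟩ => by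
    have hpos : (0 : ℝ) < #(X.solutions (Fin.init h)) := by
      exact_mod_cast (hX.nonempty_of_isTypical htypical).card_pos
    have hp := hX.p_pos
    rw [← Fin.snoc_init_self h, solutions_snoc, ← card_pos]
    exact_mod_cast (by positivity : 0 < X.p / 10 * #(X.solutions (Fin.init h))).trans_le
      (not_lt.1 hcollapse)

theorem expect_ratio_survivors {S : Finset B} (hS : S ⊆ X.start) (hne : S.Nonempty) :
    𝔼 e, (#(X.survivors S e) : ℝ) / (X.p * #S) = 1 := by
  have : (0 : ℝ) < #S := by exact_mod_cast hne.card_pos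
  have hcount : 𝔼 e, (#(X.survivors S e) : ℝ) = #S * X.p := by
    simp_rw [survivors, ← sum_boole]
    rw [expect_sum_comm, ← nsmul_eq_mul, ← sum_const]
    exact sum_congr rfl fun σ hσ => hX.prob_ok σ (hS hσ)
  have := hX.p_pos
  rw [← expect_div, hcount]
  field_simp

variable [Nonempty E]

/-- The relative size `x` after one constraint satisfies `x⁻¹ ≤ 1 - (x - 1) + 10 * (x - 1) ^ 2`
unless the solutions collapse, and the linear term has mean zero. -/
theorem expect_inv_relSize_survivors_le (s : ℕ) {S : Finset B} (hS : S ⊆ X.start)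
    (hne : S.Nonempty) (hspread : X.IsSpread S) :
    𝔼 e, (if X.Collapses S e then 0 else (X.relSize (s + 1) (X.survivors S e))⁻¹) ≤
      (1 + 10 * V) * (X.relSize s S)⁻¹ := by
  set x : E → ℝ := fun e => #(X.survivors S e) / (X.p * #S) with hx
  have hp := hX.p_pos
  have : (0 : ℝ) < #S := by exact_mod_cast hne.card_pos
  have hsize := hX.relSize_pos s hne
  have pointwise (e : E) :
      (if X.Collapses S e then 0 else (X.relSize (s + 1) (X.survivors S e))⁻¹) ≤
        (X.relSize s S)⁻¹ * (1 - (x e - 1) + 10 * (x e - 1) ^ 2) := by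
    split_ifs with hcollapse
    · have : 0 ≤ 1 - (x e - 1) + 10 * (x e - 1) ^ 2 := by nlinarith [sq_nonneg (x e - 1 - 1 / 20)]
      positivity
    · have : 1 / 10 ≤ x e := by
        rw [hx, le_div_iff₀ (by positivity)]
        linarith [not_lt.1 hcollapse]
      rw [X.relSize_survivors s hne, mul_inv]
      gcongr
      exact inv_le_one_sub_add_sq this
  calc _ ≤ 𝔼 e, (X.relSize s S)⁻¹ * (1 - (x e - 1) + 10 * (x e - 1) ^ 2) :=
        expect_le_expect fun e _ => pointwise e
    _ = (1 + 10 * 𝔼 e, (x e - 1) ^ 2) * (X.relSize s S)⁻¹ := by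
        rw [← mul_expect, expect_add_distrib, expect_sub_distrib, expect_sub_distrib,
          ← mul_expect, hX.expect_ratio_survivors hS hne, Fintype.expect_const]
        ring
    _ ≤ (1 + 10 * V) * (X.relSize s S)⁻¹ := by
        gcongr
        exact hX.variance_le S hS hne hspread

theorem expect_inv_relSize_le (s : ℕ) :
    𝔼 h : Fin s → E, (if X.IsTame s h then (X.relSize s (X.solutions h))⁻¹ else 0) ≤
      (1 + 10 * V) ^ s := by
  have hV := hX.V_nonneg
  induction s with
  | zero =>
    have : (#X.start : ℝ) ≠ 0 := by exact_mod_cast hX.start_nonempty.card_pos.ne'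
    simp [IsTame, solutions_zero, relSize, meanSize, this]
  | succ s ih =>
    rw [expect_snoc, pow_succ']
    refine le_trans ?_ (mul_le_mul_of_nonneg_left ih (by positivity))
    rw [mul_expect]
    refine expect_le_expect fun h _ => ?_
    simp only [isTame_snoc, solutions_snoc]
    by_cases htame : X.IsTame s h
    · by_cases htypical : X.IsTypical s (X.solutions h)
      · simpa only [htame, htypical, true_and, if_true, ite_not] using
          hX.expect_inv_relSize_survivors_le s (X.solutions_subset h)
            (hX.nonempty_of_isTypical htypical) (hX.isSpread_of_isTypical htypical)
      · have := hX.relSize_nonneg s (X.solutions h)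
        simp only [htypical, false_and, and_false, if_false, Fintype.expect_const]
        positivity
    · simp [htame]

theorem prob_relSize_lt_le (s : ℕ) :
    prob (fun h : Fin s → E => X.IsTame s h ∧ X.relSize s (X.solutions h) < X.μ) ≤
      X.μ * (1 + 10 * V) ^ s := by
  have hμ := hX.μ_pos
  calc _ ≤ (𝔼 h : Fin s → E,
          if X.IsTame s h then (X.relSize s (X.solutions h))⁻¹ else 0) / X.μ⁻¹ := by
        refine prob_le_expect_div (fun h => ?_) (inv_pos.2 hμ) fun h ⟨htame, hsmall⟩ => ?_
        · have := hX.relSize_nonneg s (X.solutions h)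
          split_ifs <;> positivity
        · rw [if_pos htame]
          exact inv_anti₀ (hX.relSize_pos s (hX.nonempty_of_isTame htame)) hsmall.le
    _ ≤ X.μ * (1 + 10 * V) ^ s := by
        rw [div_inv_eq_mul, mul_comm]
        gcongr
        exact hX.expect_inv_relSize_le s

theorem prob_typical_collapses_le (s : ℕ) :
    prob (fun h : Fin (s + 1) → E => X.IsTypical s (X.solutions (Fin.init h)) ∧
      X.Collapses (X.solutions (Fin.init h)) (h (Fin.last s))) ≤ β := by
  rw [prob, expect_snoc]
  refine expect_le univ_nonempty fun h _ => ?_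
  simp only [Fin.init_snoc, Fin.snoc_last]
  by_cases htypical : X.IsTypical s (X.solutions h)
  · simp only [htypical, true_and]
    exact hX.prob_collapses_le _ (X.solutions_subset h) (hX.nonempty_of_isTypical htypical)
      (hX.isSpread_of_isTypical htypical)
  · simpa [htypical] using hX.β_nonneg

theorem prob_not_isTame_succ_le (s : ℕ) {δ : ℝ}
    (hheavy : 𝔼 h : Fin s → E, (#(X.heavyPairs (X.solutions h)) : ℝ) ≤ δ * X.meanSize s ^ 2) :
    prob (fun h => ¬ X.IsTame (s + 1) h) ≤ prob (fun h => ¬ X.IsTame s h) +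
      (δ / X.τ + X.μ * (1 + 10 * V) ^ s + β) := by
  have hτ := hX.τ_pos
  have hmean := hX.meanSize_pos s
  set manyHeavy : (Fin s → E) → Prop :=
    fun h => X.τ * X.meanSize s ^ 2 < #(X.heavyPairs (X.solutions h))
  set fewSolutions : (Fin s → E) → Prop :=
    fun h => X.IsTame s h ∧ X.relSize s (X.solutions h) < X.μ
  have cover (h : Fin (s + 1) → E) (hnot : ¬ X.IsTame (s + 1) h) :
      (¬ X.IsTame s (Fin.init h) ∨ manyHeavy (Fin.init h) ∨ fewSolutions (Fin.init h)) ∨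
        X.IsTypical s (X.solutions (Fin.init h)) ∧
          X.Collapses (X.solutions (Fin.init h)) (h (Fin.last s)) := by
    simp only [IsTame, IsTypical, manyHeavy, fewSolutions, ← not_le] at hnot ⊢
    tauto
  have hmany : prob manyHeavy ≤ δ / X.τ := by
    calc prob manyHeavy ≤ _ := prob_le_expect_div (fun h => Nat.cast_nonneg _)
          (mul_pos hτ (pow_pos hmean 2)) fun h => le_of_lt
      _ ≤ δ * X.meanSize s ^ 2 / (X.τ * X.meanSize s ^ 2) := by gcongr
      _ = δ / X.τ := by field_simp
  have hunion := (prob_mono cover).trans (prob_or_le _ _)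
  have hpast := prob_or_le (fun h => ¬ X.IsTame s h) fun h => manyHeavy h ∨ fewSolutions h
  rw [prob_init s fun h => ¬ X.IsTame s h ∨ manyHeavy h ∨ fewSolutions h] at hunion
  linarith [prob_or_le manyHeavy fewSolutions, hX.prob_relSize_lt_le s,
    hX.prob_typical_collapses_le s]

theorem prob_solutions_eq_empty_le (m : ℕ) {δ : ℝ}
    (hheavy : ∀ s < m, 𝔼 h : Fin s → E, (#(X.heavyPairs (X.solutions h)) : ℝ) ≤
      δ * X.meanSize s ^ 2) :
    prob (fun h : Fin m → E => X.solutions h = ∅) ≤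
      m * (δ / X.τ + X.μ * (1 + 10 * V) ^ m + β) := by
  have hV := hX.V_nonneg
  have hμ := hX.μ_pos
  have hfail (s : ℕ) (hs : s ≤ m) :
      prob (fun h => ¬ X.IsTame s h) ≤ s * (δ / X.τ + X.μ * (1 + 10 * V) ^ m + β) := by
    induction s with
    | zero => simp [prob, IsTame]
    | succ s ih =>
      have hpow : X.μ * (1 + 10 * V) ^ s ≤ X.μ * (1 + 10 * V) ^ m := by
        gcongr
        · linarith
        · omega
      push_cast
      linarith [ih (by omega), hX.prob_not_isTame_succ_le s (hheavy s (by omega))]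
  refine (prob_mono fun h hempty htame => ?_).trans (hfail m le_rfl)
  exact (hX.nonempty_of_isTame htame).ne_empty hempty

end StepBounds

theorem IsSpread.expect_expect_le {X : Exposure B E} {S : Finset B} (hspread : X.IsSpread S)
    (hne : S.Nonempty) {f : B → B → ℝ} {v : ℝ}
    (hlight : ∀ σ ∈ S, ∀ τ ∈ S, ¬ X.heavy σ τ → f σ τ ≤ v)
    (hall : ∀ σ ∈ S, ∀ τ ∈ S, f σ τ ≤ v + 1) :
    𝔼 σ ∈ S, 𝔼 τ ∈ S, f σ τ ≤ v + X.τ / X.μ ^ 2 := by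
  have : (0 : ℝ) < #S := by exact_mod_cast hne.card_pos
  calc 𝔼 σ ∈ S, 𝔼 τ ∈ S, f σ τ
      ≤ 𝔼 σ ∈ S, 𝔼 τ ∈ S, (v + if X.heavy σ τ then 1 else 0) := by
        refine expect_le_expect fun σ hσ => expect_le_expect fun τ hτ => ?_
        split_ifs with hheavy
        · exact hall σ hσ τ hτ
        · simpa using hlight σ hσ τ hτ hheavy
    _ = v + #(X.heavyPairs S) / #S ^ 2 := by
        simp_rw [expect_add_distrib, expect_const hne]
        rw [← expect_product' S S fun σ τ => if X.heavy σ τ then (1 : ℝ) else 0,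
          expect_eq_sum_div_card, sum_boole, heavyPairs, card_product]
        push_cast
        ring
    _ ≤ v + X.τ / X.μ ^ 2 := by
        rw [add_le_add_iff_left]
        exact (div_le_iff₀ (by positivity)).2 hspread

theorem expect_card_heavyPairs_solutions [Fintype E] [Nonempty E] (s : ℕ) :
    𝔼 h : Fin s → E, (#(X.heavyPairs (X.solutions h)) : ℝ) =
      ∑ x ∈ X.heavyPairs X.start, prob (fun e => X.ok x.1 e ∧ X.ok x.2 e) ^ s := by
  have count (h : Fin s → E) : (#(X.heavyPairs (X.solutions h)) : ℝ) =
      ∑ x ∈ X.heavyPairs X.start,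
        ∏ i, if X.ok x.1 (h i) ∧ X.ok x.2 (h i) then (1 : ℝ) else 0 := by
    have : X.heavyPairs (X.solutions h) =
        {x ∈ X.heavyPairs X.start | ∀ i, X.ok x.1 (h i) ∧ X.ok x.2 (h i)} := by
      ext x
      simp only [heavyPairs, solutions, mem_filter, mem_product, forall_and]
      tauto
    simp only [this, prod_ite_zero, prod_const_one, mem_univ, true_implies, sum_boole]
  simp_rw [count]
  rw [expect_sum_comm]
  refine sum_congr rfl fun x _ => ?_
  rw [expect_prod_comp univ fun e => if X.ok x.1 e ∧ X.ok x.2 e then (1 : ℝ) else 0, card_univ,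
    Fintype.card_fin, prob_eq_expect]

end Exposure

section Spin

/-- The Ising encoding of a colour, which turns correlations between colourings into products. -/
def spin (b : Bool) : ℝ := if b then 1 else -1

@[simp] theorem spin_true : spin true = 1 := rfl

@[simp] theorem spin_false : spin false = -1 := rfl

theorem abs_spin (b : Bool) : |spin b| = 1 := by cases b <;> simp

theorem spin_mul_self (b : Bool) : spin b * spin b = 1 := by cases b <;> simp

theorem spin_mul_spin (b c : Bool) : spin b * spin c = 1 - 2 * if b ≠ c then 1 else 0 := by
  cases b <;> cases c <;> norm_num

theorem one_add_spin_mul_spin_div_two (b c : Bool) :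
    (1 + spin b * spin c) / 2 = if c = b then 1 else 0 := by
  cases b <;> cases c <;> norm_num

end Spin

section EvenPart

/-- The even part of `(1 + x) ^ k`. -/
def evenPart (k : ℕ) (x : ℝ) : ℝ := ((1 + x) ^ k + (1 - x) ^ k) / 2

theorem evenPart_eq_sum (k : ℕ) (x : ℝ) :
    evenPart k x = ∑ j ∈ range (k + 1) with Even j, k.choose j * x ^ j := by
  rw [evenPart, sub_eq_add_neg, add_comm 1 x, add_comm 1 (-x), add_pow, add_pow,
    ← sum_add_distrib, sum_div, sum_filter]
  refine sum_congr rfl fun j _ => ?_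
  split_ifs with hj
  · rw [hj.neg_pow]
    ring
  · rw [(Nat.not_even_iff_odd.1 hj).neg_pow]
    ring

theorem one_le_evenPart (k : ℕ) (x : ℝ) : 1 ≤ evenPart k x := by
  rw [evenPart_eq_sum]
  refine le_of_eq_of_le (by simp) (single_le_sum (f := fun j => (k.choose j : ℝ) * x ^ j)
    (fun j hj => ?_) (show 0 ∈ _ by simp))
  have := (mem_filter.1 hj).2.pow_nonneg x
  positivity

theorem evenPart_le_evenPart (k : ℕ) {x y : ℝ} (h : |x| ≤ |y|) : evenPart k x ≤ evenPart k y := by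
  rw [evenPart_eq_sum, evenPart_eq_sum]
  refine sum_le_sum fun j hj => ?_
  rw [← (mem_filter.1 hj).2.pow_abs x, ← (mem_filter.1 hj).2.pow_abs y]
  gcongr

theorem evenPart_abs (k : ℕ) (x : ℝ) : evenPart k |x| = evenPart k x :=
  (evenPart_le_evenPart k (abs_abs x).le).antisymm (evenPart_le_evenPart k (abs_abs x).ge)

theorem evenPart_mul_sub_one_le (k : ℕ) {s : ℝ} (hs : |s| ≤ 1) (x : ℝ) :
    evenPart k (s * x) - 1 ≤ s ^ 2 * (evenPart k x - 1) := by
  have hzero : 0 ∈ {j ∈ range (k + 1) | Even j} := by simp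
  rw [evenPart_eq_sum, evenPart_eq_sum, ← add_sum_erase _ _ hzero, ← add_sum_erase _ _ hzero]
  simp only [Nat.choose_zero_right, Nat.cast_one, pow_zero, mul_one, add_sub_cancel_left, mul_sum]
  refine sum_le_sum fun j hj => ?_
  obtain ⟨hj0, hj⟩ := mem_erase.1 hj
  obtain ⟨-, heven⟩ := mem_filter.1 hj
  have htwo : 2 ≤ j := by obtain ⟨i, rfl⟩ := heven; omega
  calc (k.choose j : ℝ) * (s * x) ^ j = |s| ^ j * (k.choose j * x ^ j) := by
        rw [heven.pow_abs, mul_pow]; ring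
    _ ≤ |s| ^ 2 * (k.choose j * x ^ j) :=
        mul_le_mul_of_nonneg_right (pow_le_pow_of_le_one (abs_nonneg s) hs htwo)
          (mul_nonneg (Nat.cast_nonneg _) (heven.pow_nonneg x))
    _ = s ^ 2 * (k.choose j * x ^ j) := by rw [sq_abs]

/-- The probability that a random sequence of `k` vertices is monochromatic under a balanced
colouring. -/
def monoProb (k : ℕ) : ℝ := 2 * (1 / 2) ^ k

theorem monoProb_pos (k : ℕ) : 0 < monoProb k := by unfold monoProb; positivity

theorem monoProb_mul_evenPart (k : ℕ) (d : ℝ) :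
    monoProb k * evenPart k (1 - 2 * d) = (1 - d) ^ k + d ^ k := by
  rw [monoProb, evenPart, show 1 + (1 - 2 * d) = 2 * (1 - d) by ring,
    show 1 - (1 - 2 * d) = 2 * d by ring, mul_pow, mul_pow, one_div, inv_pow]
  field_simp

theorem monoProb_le_half {k : ℕ} (hk : 2 ≤ k) : monoProb k ≤ 1 / 2 := by
  have := pow_le_pow_of_le_one (by norm_num : (0 : ℝ) ≤ 1 / 2) (by norm_num) hk
  rw [monoProb]
  linarith

theorem monoProb_le_eighth {k : ℕ} (hk : 4 ≤ k) : monoProb k ≤ 1 / 8 := by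
  have := pow_le_pow_of_le_one (by norm_num : (0 : ℝ) ≤ 1 / 2) (by norm_num) hk
  rw [monoProb]
  linarith

/-- The probability that two balanced colourings of overlap `x` both split a random edge, divided
by its value for independent events. -/
def pairRatio (k : ℕ) (x : ℝ) : ℝ :=
  1 + (monoProb k / (1 - monoProb k)) ^ 2 * (evenPart k x - 1)

theorem one_le_pairRatio (k : ℕ) (x : ℝ) : 1 ≤ pairRatio k x :=
  le_add_of_nonneg_right (mul_nonneg (sq_nonneg _) (sub_nonneg.2 (one_le_evenPart k x)))

theorem pairRatio_le_pairRatio (k : ℕ) {x y : ℝ} (h : |x| ≤ |y|) :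
    pairRatio k x ≤ pairRatio k y := by
  unfold pairRatio
  gcongr
  exact evenPart_le_evenPart k h

theorem pairRatio_abs (k : ℕ) (x : ℝ) : pairRatio k |x| = pairRatio k x := by
  rw [pairRatio, evenPart_abs, pairRatio]

theorem pairRatio_le_two {k : ℕ} (hk : 2 ≤ k) {x : ℝ} (hx : |x| ≤ 1) : pairRatio k x ≤ 2 := by
  have hhalf := monoProb_le_half hk
  have hpos := monoProb_pos k
  have hevenPart : monoProb k * evenPart k 1 = 1 := by
    simpa [show k ≠ 0 by omega] using monoProb_mul_evenPart k 0
  have hlt : 0 < 1 - monoProb k := by linarith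
  calc pairRatio k x ≤ pairRatio k 1 := pairRatio_le_pairRatio k (by rwa [abs_one])
    _ = 1 + monoProb k * (monoProb k * evenPart k 1 - monoProb k) / (1 - monoProb k) ^ 2 := by
        rw [pairRatio]; field_simp
    _ = 1 + monoProb k / (1 - monoProb k) := by rw [hevenPart]; field_simp
    _ ≤ 1 + 1 := by gcongr; rw [div_le_one hlt]; linarith
    _ = 2 := by norm_num

end EvenPart

section Colorings

variable {V : Type*} {k : ℕ}

/-- The edge `e`, given as a sequence of vertices with repetition allowed, is not monochromatic. -/
def Splits (σ : V → Bool) (e : Fin k → V) : Prop :=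
  (∃ i, σ (e i) = true) ∧ ∃ i, σ (e i) = false

theorem ite_splits (hk : k ≠ 0) (σ : V → Bool) (e : Fin k → V) :
    (if Splits σ e then (1 : ℝ) else 0) =
      1 - ∑ c, ∏ i, (1 + spin c * spin (σ (e i))) / 2 := by
  have : Nonempty (Fin k) := Fin.pos_iff_nonempty.1 (Nat.pos_of_ne_zero hk)
  have hmono (c : Bool) : ∏ i, (1 + spin c * spin (σ (e i))) / 2 =
      if ∀ i, σ (e i) = c then 1 else 0 := by
    simp only [one_add_spin_mul_spin_div_two, prod_ite_zero, prod_const_one, mem_univ,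
      true_implies]
  have hsplits : Splits σ e ↔ ¬ (∀ i, σ (e i) = false) ∧ ¬ ∀ i, σ (e i) = true := by
    simp [Splits]
  rw [Fintype.sum_bool, hmono, hmono]
  by_cases htrue : ∀ i, σ (e i) = true
  · simp [hsplits, htrue]
  · by_cases hfalse : ∀ i, σ (e i) = false <;> simp [hsplits, htrue, hfalse]

theorem one_sub_two_mul_ite_splits_le_prod_spin {I : Finset (Fin k)} (hI : Even #I)
    (σ : V → Bool) (e : Fin k → V) :
    1 - 2 * (if Splits σ e then (1 : ℝ) else 0) ≤ ∏ i ∈ I, spin (σ (e i)) := by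
  have habs : |∏ i ∈ I, spin (σ (e i))| = 1 := by simp [abs_prod, abs_spin]
  split_ifs with hsplit
  · linarith [neg_abs_le (∏ i ∈ I, spin (σ (e i)))]
  · obtain ⟨c, hc⟩ : ∃ c, ∀ i, σ (e i) = c := by
      by_contra! hne
      obtain ⟨i, hi⟩ := hne false
      obtain ⟨j, hj⟩ := hne true
      exact hsplit ⟨⟨i, by simpa using hi⟩, j, by simpa using hj⟩
    obtain ⟨j, hj⟩ := hI
    simp only [hc, prod_const, hj, pow_add, ← mul_pow, spin_mul_self, one_pow]
    norm_num

variable [Fintype V]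

/-- The normalised inner product of two colourings. -/
def overlap (σ τ : V → Bool) : ℝ := 𝔼 v, spin (σ v) * spin (τ v)

variable (V) in
/-- The colourings with two classes of equal size. -/
def balanced : Finset (V → Bool) := {σ | ∑ v, spin (σ v) = 0}

theorem expect_spin {σ : V → Bool} (hσ : σ ∈ balanced V) : 𝔼 v, spin (σ v) = 0 := by
  rw [Fintype.expect_eq_sum_div_card, (mem_filter.1 hσ).2, zero_div]

variable [Nonempty V]

theorem abs_overlap_le_one (σ τ : V → Bool) : |overlap σ τ| ≤ 1 :=
  (abs_expect_le _ _).trans <| expect_le univ_nonempty fun v _ => by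
    rw [abs_mul, abs_spin, abs_spin, one_mul]

theorem overlap_eq (σ τ : V → Bool) :
    overlap σ τ = 1 - 2 * (hammingDist σ τ / Fintype.card V) := by
  simp_rw [overlap, spin_mul_spin]
  rw [expect_sub_distrib, ← mul_expect, Fintype.expect_one, Fintype.expect_eq_sum_div_card,
    sum_boole, hammingDist]

theorem expect_prod_spin_mul_prod_spin (σ τ : V → Bool) (I : Finset (Fin k)) :
    𝔼 e : Fin k → V, (∏ i ∈ I, spin (σ (e i))) * ∏ i ∈ I, spin (τ (e i)) =
      overlap σ τ ^ #I := by
  simp only [← prod_mul_distrib]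
  exact expect_prod_comp I fun v => spin (σ v) * spin (τ v)

variable {σ τ : V → Bool}

theorem expect_sum_prod_spin (hσ : σ ∈ balanced V) :
    𝔼 e : Fin k → V, ∑ c, ∏ i, (1 + spin c * spin (σ (e i))) / 2 = monoProb k := by
  have hmean (c : Bool) : 𝔼 v, (1 + spin c * spin (σ v)) / 2 = 1 / 2 := by
    rw [← expect_div, expect_add_distrib, ← mul_expect, expect_spin hσ, Fintype.expect_one,
      mul_zero, add_zero]
  have hclass (c : Bool) :
      𝔼 e : Fin k → V, ∏ i, (1 + spin c * spin (σ (e i))) / 2 = (1 / 2) ^ k := by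
    rw [expect_prod_comp univ fun v => (1 + spin c * spin (σ v)) / 2, hmean, card_univ,
      Fintype.card_fin]
  simp_rw [expect_sum_comm, hclass]
  rw [sum_const, card_univ, Fintype.card_bool, nsmul_eq_mul, Nat.cast_two, monoProb]

theorem expect_sum_prod_spin_mul (hσ : σ ∈ balanced V) (hτ : τ ∈ balanced V) :
    𝔼 e : Fin k → V, (∑ c, ∏ i, (1 + spin c * spin (σ (e i))) / 2) *
        ∑ d, ∏ i, (1 + spin d * spin (τ (e i))) / 2 =
      monoProb k ^ 2 * evenPart k (overlap σ τ) := by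
  have hmean (c d : Bool) :
      𝔼 v, (1 + spin c * spin (σ v)) / 2 * ((1 + spin d * spin (τ v)) / 2) =
        (1 + spin c * spin d * overlap σ τ) / 4 := by
    have expand (v : V) : (1 + spin c * spin (σ v)) / 2 * ((1 + spin d * spin (τ v)) / 2) =
        (1 + spin c * spin (σ v) + spin d * spin (τ v) +
          spin c * spin d * (spin (σ v) * spin (τ v))) / 4 := by ring
    simp_rw [expand]
    rw [← expect_div, expect_add_distrib, expect_add_distrib, expect_add_distrib, ← mul_expect,
      ← mul_expect, ← mul_expect, expect_spin hσ, expect_spin hτ, Fintype.expect_one, ← overlap]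
    ring
  have hpair (c d : Bool) : 𝔼 e : Fin k → V, (∏ i, (1 + spin c * spin (σ (e i))) / 2) *
      ∏ i, (1 + spin d * spin (τ (e i))) / 2 = ((1 + spin c * spin d * overlap σ τ) / 4) ^ k := by
    simp_rw [← prod_mul_distrib]
    rw [expect_prod_comp univ fun v =>
      (1 + spin c * spin (σ v)) / 2 * ((1 + spin d * spin (τ v)) / 2), hmean, card_univ,
      Fintype.card_fin]
  simp_rw [sum_mul_sum, expect_sum_comm, hpair]
  simp only [Fintype.sum_bool, spin_true, spin_false, monoProb, evenPart, div_pow]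
  rw [(by norm_num : (4 : ℝ) = 2 * 2), mul_pow]
  ring

theorem prob_splits (hk : k ≠ 0) (hσ : σ ∈ balanced V) :
    prob (fun e : Fin k → V => Splits σ e) = 1 - monoProb k := by
  simp_rw [prob, ite_splits hk]
  rw [expect_sub_distrib, Fintype.expect_one, expect_sum_prod_spin hσ]

theorem prob_splits_and (hk : 2 ≤ k) (hσ : σ ∈ balanced V) (hτ : τ ∈ balanced V) :
    prob (fun e : Fin k → V => Splits σ e ∧ Splits τ e) =
      (1 - monoProb k) ^ 2 * pairRatio k (overlap σ τ) := by
  have hne : 1 - monoProb k ≠ 0 := by linarith [monoProb_le_half hk]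
  have expand (a b : ℝ) : (1 - a) * (1 - b) = 1 - a - b + a * b := by ring
  simp_rw [prob_and_eq_expect, ite_splits (by omega : k ≠ 0), expand]
  rw [expect_add_distrib, expect_sub_distrib, expect_sub_distrib, Fintype.expect_one,
    expect_sum_prod_spin hσ, expect_sum_prod_spin hτ, expect_sum_prod_spin_mul hσ hτ, pairRatio]
  field_simp
  ring

theorem expect_ite_splits_sub_one_mul (hk : 2 ≤ k) (hσ : σ ∈ balanced V) (hτ : τ ∈ balanced V) :
    𝔼 e : Fin k → V, ((if Splits σ e then 1 else 0) / (1 - monoProb k) - 1) *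
        ((if Splits τ e then 1 else 0) / (1 - monoProb k) - 1) =
      pairRatio k (overlap σ τ) - 1 := by
  set p := 1 - monoProb k with hp
  have hne : p ≠ 0 := by linarith [monoProb_le_half hk, hp]
  have expand (a b : ℝ) : (a / p - 1) * (b / p - 1) = a * b / p ^ 2 - a / p - b / p + 1 := by
    field_simp
    ring
  simp_rw [expand]
  rw [expect_add_distrib, expect_sub_distrib, expect_sub_distrib, ← expect_div, ← expect_div,
    ← expect_div, ← prob_and_eq_expect, ← prob, ← prob, prob_splits_and hk hσ hτ,
    prob_splits (by omega) hσ,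
    prob_splits (by omega) hτ, Fintype.expect_one]
  field_simp
  ring

end Colorings

section BalancedProcess

variable {V : Type*} [Fintype V] {k : ℕ} {r τ μ : ℝ}

variable (V k) in
/-- Random edges with `k` vertices imposed on the balanced colourings of `V`. -/
def coloringExposure (r τ μ : ℝ) : Exposure (V → Bool) (Fin k → V) where
  ok := Splits
  start := balanced V
  heavy σ σ' := r < |overlap σ σ'|
  p := 1 - monoProb k
  τ := τ
  μ := μ

theorem card_survivors_div (S : Finset (V → Bool)) (e : Fin k → V) :
    (#((coloringExposure V k r τ μ).survivors S e) : ℝ) / #S =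
      𝔼 σ ∈ S, if Splits σ e then 1 else 0 := by
  rw [expect_eq_sum_div_card, sum_boole]
  rfl

theorem card_survivors_div_sub_one {S : Finset (V → Bool)} (hne : S.Nonempty) (e : Fin k → V) :
    (#((coloringExposure V k r τ μ).survivors S e) : ℝ) / ((1 - monoProb k) * #S) - 1 =
      𝔼 σ ∈ S, ((if Splits σ e then 1 else 0) / (1 - monoProb k) - 1) := by
  rw [expect_sub_distrib, expect_const hne, ← expect_div, ← card_survivors_div (r := r) (τ := τ)
    (μ := μ), div_div, mul_comm]

theorem sum_hammingDist (σ : V → Bool) (f : ℕ → ℝ) :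
    ∑ σ' : V → Bool, f (hammingDist σ σ') =
      ∑ a ∈ range (Fintype.card V + 1), (Fintype.card V).choose a * f a := by
  simp_rw [← card_univ (α := V), ← nsmul_eq_mul]
  rw [← sum_powerset_apply_card]
  refine sum_nbij' (fun σ' => ({v | σ v ≠ σ' v} : Finset V))
    (fun A v => xor (σ v) (decide (v ∈ A))) (by simp) (by simp)
    (fun σ' _ => ?_) (fun A _ => ?_) fun σ' _ => rfl
  · funext v
    cases hσ : σ v <;> cases hσ' : σ' v <;> simp [hσ, hσ']
  · ext v
    cases hσ : σ v <;> simp [hσ]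

variable [Nonempty V] {S : Finset (V → Bool)}

theorem expect_survivors_sub_one_sq_le (hk : 2 ≤ k) (hS : S ⊆ balanced V) (hne : S.Nonempty)
    (hspread : (coloringExposure V k r τ μ).IsSpread S) :
    𝔼 e : Fin k → V,
        ((#((coloringExposure V k r τ μ).survivors S e) : ℝ) / ((1 - monoProb k) * #S) - 1) ^ 2 ≤
      pairRatio k r - 1 + τ / μ ^ 2 := by
  simp_rw [card_survivors_div_sub_one hne]
  rw [expect_sq_expect]
  refine hspread.expect_expect_le hne (fun σ hσ σ' hσ' hlight => ?_) fun σ hσ σ' hσ' => ?_ <;>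
    rw [expect_ite_splits_sub_one_mul hk (hS hσ) (hS hσ')]
  · gcongr
    exact pairRatio_le_pairRatio k ((not_lt.1 hlight).trans (le_abs_self r))
  · linarith [one_le_pairRatio k r, pairRatio_le_two hk (abs_overlap_le_one σ σ')]

/-- Colourings that do not split `e` give the same product of an even number of spins along `e`.
If `S` collapses, the average of this product over `S` is therefore far from `0`, whereas its mean
square over `e` is a moment of the overlap. -/
theorem prob_collapses_coloringExposure_le (hk : 4 ≤ k) (hne : S.Nonempty)
    (hspread : (coloringExposure V k r τ μ).IsSpread S) :
    prob ((coloringExposure V k r τ μ).Collapses S) ≤ 25 / 16 * (r ^ 4 + τ / μ ^ 2) := by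
  obtain ⟨I, -, hI⟩ : ∃ I ⊆ (univ : Finset (Fin k)), #I = 4 :=
    exists_subset_card_eq (by simpa using hk)
  have hcard : (0 : ℝ) < #S := by exact_mod_cast hne.card_pos
  set average : (Fin k → V) → ℝ := fun e => 𝔼 σ ∈ S, ∏ i ∈ I, spin (σ (e i))
  have hlarge (e : Fin k → V) (hcollapse : (coloringExposure V k r τ μ).Collapses S e) :
      16 / 25 ≤ average e ^ 2 := by
    have hfew : (#((coloringExposure V k r τ μ).survivors S e) : ℝ) / #S ≤ 1 / 10 := by
      rw [div_le_iff₀ hcard]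
      refine hcollapse.le.trans ?_
      gcongr
      simpa [coloringExposure] using (monoProb_pos k).le
    have : 1 - 2 * ((#((coloringExposure V k r τ μ).survivors S e) : ℝ) / #S) ≤ average e := by
      rw [card_survivors_div, mul_expect, ← expect_const hne (1 : ℝ), ← expect_sub_distrib,
        expect_const hne]
      exact expect_le_expect fun σ _ =>
        one_sub_two_mul_ite_splits_le_prod_spin (by rw [hI]; decide) σ e
    nlinarith
  have hsecond : 𝔼 e, average e ^ 2 ≤ r ^ 4 + τ / μ ^ 2 := by
    simp_rw [average, expect_sq_expect, expect_prod_spin_mul_prod_spin, hI]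
    refine hspread.expect_expect_le hne (fun σ _ σ' _ hlight => ?_) fun σ _ σ' _ => ?_
    · rw [← (by decide : Even 4).pow_abs]
      exact pow_le_pow_left₀ (abs_nonneg _) (not_lt.1 hlight) 4
    · rw [← (by decide : Even 4).pow_abs]
      have := pow_le_one₀ (n := 4) (abs_nonneg _) (abs_overlap_le_one σ σ')
      linarith [(by decide : Even 4).pow_nonneg r]
  calc prob ((coloringExposure V k r τ μ).Collapses S) ≤ (𝔼 e, average e ^ 2) / (16 / 25) :=
        prob_le_expect_div (fun e => sq_nonneg _) (by norm_num) hlarge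
    _ ≤ 25 / 16 * (r ^ 4 + τ / μ ^ 2) := by linarith

theorem two_pow_le_card_mul_card_balanced (heven : Even (Fintype.card V)) :
    (2 : ℝ) ^ Fintype.card V ≤ Fintype.card V * #(balanced V) := by
  obtain ⟨P, hP⟩ := heven
  rw [← two_mul] at hP
  have hspin (A : Finset V) (v : V) :
      spin (decide (v ∈ A)) = 2 * (if v ∈ A then 1 else 0) - 1 := by
    by_cases hv : v ∈ A <;> norm_num [hv]
  have hchoose : P.centralBinom ≤ #(balanced V) := by
    rw [Nat.centralBinom, ← hP, ← card_univ, ← card_powersetCard]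
    refine card_le_card_of_injOn (fun A v => decide (v ∈ A)) (fun A hA => ?_) fun A _ A' _ h => ?_
    · have : (#A : ℝ) = P := by exact_mod_cast (mem_powersetCard.1 hA).2
      simp [balanced, hspin, sum_sub_distrib, this, hP, mul_comm]
    · ext v
      simpa using congrFun h v
  have hpos : 0 < P := by have := Fintype.card_pos (α := V); omega
  have : 4 ^ P ≤ 2 * P * #(balanced V) :=
    (Nat.four_pow_le_two_mul_self_mul_centralBinom P hpos).trans (by gcongr)
  rw [hP, pow_mul]
  norm_num
  exact_mod_cast this

theorem sum_heavy_pairRatio_pow_le (s : ℕ) {D : ℝ} (hD : 0 ≤ D)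
    (hbound : ∀ a ≤ Fintype.card V, r < |1 - 2 * ((a : ℝ) / Fintype.card V)| →
      (Fintype.card V).choose a * pairRatio k (1 - 2 * (a / Fintype.card V)) ^ s ≤
        2 ^ Fintype.card V * D) (σ : V → Bool) :
    ∑ σ' with r < |overlap σ σ'|, pairRatio k (overlap σ σ') ^ s ≤
      (Fintype.card V + 1) * (2 ^ Fintype.card V * D) := by
  set N := Fintype.card V
  rw [sum_filter]
  simp_rw [overlap_eq]
  rw [sum_hammingDist σ fun a => if r < |1 - 2 * ((a : ℝ) / N)| then
    pairRatio k (1 - 2 * (a / N)) ^ s else 0]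
  calc _ ≤ ∑ _a ∈ range (N + 1), (2 : ℝ) ^ N * D := by
        refine sum_le_sum fun a ha => ?_
        split_ifs with hheavy
        · exact hbound a (Nat.lt_succ_iff.1 (mem_range.1 ha)) hheavy
        · rw [mul_zero]; positivity
    _ = (N + 1) * (2 ^ N * D) := by simp

theorem expect_card_heavyPairs_coloringExposure_le (heven : Even (Fintype.card V)) (hk : 2 ≤ k)
    (s : ℕ) {D : ℝ} (hD : 0 ≤ D)
    (hbound : ∀ a ≤ Fintype.card V, r < |1 - 2 * ((a : ℝ) / Fintype.card V)| →
      (Fintype.card V).choose a * pairRatio k (1 - 2 * (a / Fintype.card V)) ^ s ≤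
        2 ^ Fintype.card V * D) :
    𝔼 h : Fin s → Fin k → V, (#((coloringExposure V k r τ μ).heavyPairs
        ((coloringExposure V k r τ μ).solutions h)) : ℝ) ≤
      (Fintype.card V + 1) ^ 2 * D * (coloringExposure V k r τ μ).meanSize s ^ 2 := by
  set N := Fintype.card V
  set p := 1 - monoProb k
  have hratio (σ σ' : V → Bool) : 0 ≤ pairRatio k (overlap σ σ') ^ s :=
    pow_nonneg (zero_le_one.trans (one_le_pairRatio k _)) s
  have hcard := two_pow_le_card_mul_card_balanced heven
  calc _ = ∑ x ∈ (coloringExposure V k r τ μ).heavyPairs (balanced V),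
          (p ^ s) ^ 2 * pairRatio k (overlap x.1 x.2) ^ s := by
        rw [Exposure.expect_card_heavyPairs_solutions]
        refine sum_congr rfl fun x hx => ?_
        obtain ⟨hx₁, hx₂⟩ := mem_product.1 (mem_filter.1 hx).1
        exact (congrArg (· ^ s) (prob_splits_and hk hx₁ hx₂)).trans
          (by rw [mul_pow, ← pow_mul, ← pow_mul, mul_comm s])
    _ ≤ ∑ σ ∈ balanced V, (p ^ s) ^ 2 *
          ∑ σ' with r < |overlap σ σ'|, pairRatio k (overlap σ σ') ^ s := by
        rw [Exposure.heavyPairs, sum_filter, sum_product]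
        refine sum_le_sum fun σ _ => ?_
        rw [← sum_filter, ← mul_sum]
        gcongr
        · exact fun σ' _ _ => hratio σ σ'
        · exact fun σ' hσ' => mem_filter.2 ⟨mem_univ σ', (mem_filter.1 hσ').2⟩
    _ ≤ ∑ _σ ∈ balanced V, (p ^ s) ^ 2 * ((N + 1) * (2 ^ N * D)) := by
        gcongr with σ
        exact sum_heavy_pairRatio_pow_le s hD hbound σ
    _ ≤ ∑ _σ ∈ balanced V, (p ^ s) ^ 2 * ((N + 1) * ((N + 1) * #(balanced V) * D)) := by
        gcongr
        linarith [(Nat.cast_nonneg _ : (0 : ℝ) ≤ #(balanced V))]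
    _ = (N + 1) ^ 2 * D * (#(balanced V) * p ^ s) ^ 2 := by
        rw [sum_const, nsmul_eq_mul]
        ring

theorem prob_no_balanced_solution_le (heven : Even (Fintype.card V)) (hk : 4 ≤ k) {D : ℝ}
    (hτ : 0 < τ) (hμ : 0 < μ) (hD : 0 ≤ D) (m : ℕ)
    (hbound : ∀ s < m, ∀ a ≤ Fintype.card V, r < |1 - 2 * ((a : ℝ) / Fintype.card V)| →
      (Fintype.card V).choose a * pairRatio k (1 - 2 * (a / Fintype.card V)) ^ s ≤
        2 ^ Fintype.card V * D) :
    prob (fun h : Fin m → Fin k → V => ∀ σ ∈ balanced V, ∃ i, ¬ Splits σ (h i)) ≤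
      m * ((Fintype.card V + 1) ^ 2 * D / τ + μ * (1 + 10 * (pairRatio k r - 1 + τ / μ ^ 2)) ^ m +
        25 / 16 * (r ^ 4 + τ / μ ^ 2)) := by
  have hstep : (coloringExposure V k r τ μ).StepBounds (pairRatio k r - 1 + τ / μ ^ 2)
      (25 / 16 * (r ^ 4 + τ / μ ^ 2)) :=
    { start_nonempty := by
        have := two_pow_le_card_mul_card_balanced heven
        by_contra hempty
        have hcard : #(balanced V) = 0 := by
          rwa [card_eq_zero, ← not_nonempty_iff_eq_empty]
        rw [hcard, Nat.cast_zero, mul_zero] at this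
        exact this.not_gt (by positivity)
      p_pos := sub_pos.2 ((monoProb_le_half (by omega)).trans_lt (by norm_num))
      τ_pos := hτ
      μ_pos := hμ
      V_nonneg := add_nonneg (sub_nonneg.2 (one_le_pairRatio k r)) (by positivity)
      β_nonneg := by positivity
      prob_ok := fun σ hσ => prob_splits (by omega) hσ
      variance_le := fun S hS hne => expect_survivors_sub_one_sq_le (by omega) hS hne
      prob_collapses_le := fun S _ hne => prob_collapses_coloringExposure_le hk hne }
  refine (prob_mono fun h hnone => ?_).trans (hstep.prob_solutions_eq_empty_le m fun s hs =>
    expect_card_heavyPairs_coloringExposure_le heven (by omega) s hD (hbound s hs))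
  exact filter_eq_empty_iff.2 fun σ hσ => not_forall.2 (hnone σ hσ)

end BalancedProcess

section Entropy

open Real

theorem negMulLog_add_mul_log_le {p w : ℝ} (hp : 0 ≤ p) (hw : 0 < w) :
    negMulLog p + p * log w ≤ w - p := by
  rcases hp.eq_or_lt with rfl | hp
  · simpa using hw.le
  have := mul_le_mul_of_nonneg_left (negMulLog_le_one_sub_self (div_pos hp hw).le) hw.le
  rw [negMulLog, log_div hp.ne' hw.ne'] at this
  rw [negMulLog]
  field_simp at this ⊢
  linarith

theorem binEntropy_le_add_negMulLog {d : ℝ} (hd : d ≤ 1) : binEntropy d ≤ d + negMulLog d := by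
  rw [binEntropy_eq_negMulLog_add_negMulLog_one_sub]
  linarith [negMulLog_le_one_sub_self (sub_nonneg.2 hd)]

/-- Gibbs' inequality against the weights `exp (∓(1 - 2 * d))`. -/
theorem binEntropy_le_log_two_sub {d : ℝ} (hd₀ : 0 ≤ d) (hd₁ : d ≤ 1) :
    binEntropy d ≤ log 2 - (1 - 2 * d) ^ 2 / 2 := by
  set x := 1 - 2 * d with hx
  have hcosh := cosh_pos x
  have hlogcosh : log (2 * cosh x) ≤ log 2 + x ^ 2 / 2 := by
    rw [log_mul two_ne_zero hcosh.ne', ← log_exp (x ^ 2 / 2)]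
    gcongr
    exact cosh_le_exp_half_sq x
  have hweights : exp (-x) / (2 * cosh x) + exp x / (2 * cosh x) = 1 := by
    rw [cosh_eq]
    field_simp
    ring
  have hsmall := negMulLog_add_mul_log_le hd₀ (w := exp (-x) / (2 * cosh x)) (by positivity)
  have hlarge := negMulLog_add_mul_log_le (sub_nonneg.2 hd₁) (w := exp x / (2 * cosh x))
    (by positivity)
  rw [log_div (exp_pos _).ne' (by positivity), log_exp] at hsmall hlarge
  rw [binEntropy_eq_negMulLog_add_negMulLog_one_sub]
  have : d = (1 - x) / 2 := by rw [hx]; ring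
  nlinarith

theorem div_pow_eq_exp_neg_mul_negMulLog {N : ℕ} (hN : N ≠ 0) (a : ℕ) :
    ((a : ℝ) / N) ^ a = exp (-(N * negMulLog (a / N))) := by
  rcases eq_or_ne a 0 with rfl | ha
  · simp
  rw [show -(N * negMulLog (a / N)) = a * log ((a : ℝ) / N) by rw [negMulLog]; field_simp,
    exp_nat_mul, exp_log (by positivity)]

theorem choose_le_exp_binEntropy {N a : ℕ} (hN : N ≠ 0) (ha : a ≤ N) :
    (N.choose a : ℝ) ≤ exp (N * binEntropy (a / N)) := by
  have hcompl : 1 - (a : ℝ) / N = ((N - a : ℕ) : ℝ) / N := by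
    rw [Nat.cast_sub ha]
    field_simp
  have hterm : ((a : ℝ) / N) ^ a * (((N - a : ℕ) : ℝ) / N) ^ (N - a) * N.choose a ≤ 1 := by
    refine (single_le_sum (f := fun i => ((a : ℝ) / N) ^ i * (((N - a : ℕ) : ℝ) / N) ^ (N - i) *
      N.choose i) (fun i _ => by positivity) (mem_range_succ_iff.2 ha)).trans ?_
    rw [← add_pow, ← hcompl, add_sub_cancel, one_pow]
  rw [div_pow_eq_exp_neg_mul_negMulLog hN, div_pow_eq_exp_neg_mul_negMulLog hN, ← exp_add,
    ← neg_add, exp_neg, inv_mul_le_iff₀ (exp_pos _), mul_one, ← mul_add] at hterm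
  rwa [binEntropy_eq_negMulLog_add_negMulLog_one_sub, hcompl]

end Entropy

section Rate

open Real

/-- The edge density up to which the balanced second moment method works. -/
def threshold (k : ℕ) : ℝ := log 2 / monoProb k - log 2 / 2 - (1 + 1 / (k : ℝ)) / 2

theorem threshold_mul_monoProb (k : ℕ) :
    threshold k * monoProb k = log 2 - monoProb k * (log 2 + 1 + 1 / k) / 2 := by
  have := (monoProb_pos k).ne'
  rw [threshold]
  field_simp
  ring

theorem threshold_mul_monoProb_le (k : ℕ) : threshold k * monoProb k ≤ log 2 := by
  rw [threshold_mul_monoProb]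
  have := monoProb_pos k
  have := log_pos one_lt_two
  exact sub_le_self _ (by positivity)

theorem threshold_pos {k : ℕ} (hk : 2 ≤ k) : 0 < threshold k := by
  have hhalf := monoProb_le_half hk
  have hinv : 1 / (k : ℝ) ≤ 1 / 2 := by gcongr; exact_mod_cast hk
  refine pos_of_mul_pos_left ?_ (monoProb_pos k).le
  rw [threshold_mul_monoProb]
  nlinarith [log_two_gt_d9, log_two_lt_d9, monoProb_pos k]

theorem threshold_mul_log_pairRatio_le {k : ℕ} (hk : 4 ≤ k) (x : ℝ) :
    threshold k * log (pairRatio k x) ≤ monoProb k * (evenPart k x - 1) := by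
  have hq := monoProb_pos k
  have hE := sub_nonneg.2 (one_le_evenPart k x)
  have hsmall : log 2 / (1 - monoProb k) ^ 2 ≤ 1 := by
    rw [div_le_one (by nlinarith [monoProb_le_eighth hk])]
    nlinarith [monoProb_le_eighth hk, log_two_lt_d9]
  calc threshold k * log (pairRatio k x) ≤ threshold k * (pairRatio k x - 1) := by
        have := one_le_pairRatio k x
        gcongr
        · exact (threshold_pos (by omega)).le
        · exact log_le_sub_one_of_pos (by linarith)
    _ = threshold k * monoProb k * (monoProb k * (evenPart k x - 1)) / (1 - monoProb k) ^ 2 := by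
        rw [pairRatio, div_pow]; ring
    _ ≤ log 2 * (monoProb k * (evenPart k x - 1)) / (1 - monoProb k) ^ 2 := by
        gcongr; exact threshold_mul_monoProb_le k
    _ = log 2 / (1 - monoProb k) ^ 2 * (monoProb k * (evenPart k x - 1)) := by ring
    _ ≤ monoProb k * (evenPart k x - 1) := mul_le_of_le_one_left (by positivity) hsmall

theorem one_sub_pow_le_inv (k : ℕ) {d : ℝ} (hd₀ : 0 ≤ d) (hd₁ : d ≤ 1) :
    (1 - d) ^ k ≤ (1 + k * d)⁻¹ := by
  rw [← one_div, le_div_iff₀ (by positivity)]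
  calc (1 - d) ^ k * (1 + k * d) ≤ (1 - d) ^ k * (1 + d) ^ k :=
        mul_le_mul_of_nonneg_left (one_add_mul_le_pow (by linarith) k)
          (pow_nonneg (sub_nonneg.2 hd₁) k)
    _ = (1 - d ^ 2) ^ k := by rw [← mul_pow]; ring
    _ ≤ 1 := pow_le_one₀ (by nlinarith) (by nlinarith)

theorem pairRatio_sub_one_le {k : ℕ} (hk : 4 ≤ k) {r : ℝ} (hr : |k * r| ≤ 1) :
    pairRatio k r - 1 ≤ 2 * (monoProb k * k * r) ^ 2 := by
  have hk0 : (0 : ℝ) < k := by positivity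
  have hone : evenPart k (1 / k) ≤ 2 := by
    have hplus : (1 + 1 / (k : ℝ)) ^ k ≤ exp 1 := by
      calc (1 + 1 / (k : ℝ)) ^ k ≤ exp (1 / k) ^ k := by
            gcongr; linarith [add_one_le_exp (1 / (k : ℝ))]
        _ = exp 1 := by rw [← exp_nat_mul, mul_one_div_cancel hk0.ne']
    have hminus : (1 - 1 / (k : ℝ)) ^ k ≤ 1 := by
      refine pow_le_one₀ (sub_nonneg.2 ?_) (by linarith [one_div_pos.2 hk0])
      rw [div_le_one hk0]
      exact_mod_cast (by omega : 1 ≤ k)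
    rw [evenPart]
    linarith [exp_one_lt_d9]
  have hevenPart : evenPart k r - 1 ≤ (k * r) ^ 2 := by
    have := evenPart_mul_sub_one_le k hr (1 / k)
    rw [mul_comm (k : ℝ) r, mul_assoc, mul_one_div_cancel hk0.ne', mul_one] at this
    nlinarith [sq_nonneg (k * r)]
  have hquot : (monoProb k / (1 - monoProb k)) ^ 2 ≤ 2 * monoProb k ^ 2 := by
    have := monoProb_le_eighth hk
    rw [div_pow, div_le_iff₀ (by nlinarith)]
    nlinarith [sq_nonneg (monoProb k)]
  calc pairRatio k r - 1 = (monoProb k / (1 - monoProb k)) ^ 2 * (evenPart k r - 1) := by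
        rw [pairRatio]; ring
    _ ≤ 2 * monoProb k ^ 2 * (k * r) ^ 2 :=
        mul_le_mul hquot hevenPart (sub_nonneg.2 (one_le_evenPart k r)) (by positivity)
    _ = 2 * (monoProb k * k * r) ^ 2 := by ring

/-- The exponential rate at which pairs of colourings at Hamming distance `d * N` become negligible
in the second moment of the number of balanced solutions at edge density `threshold k`. -/
def pairRate (k : ℕ) (d : ℝ) : ℝ :=
  log 2 - binEntropy d - threshold k * log (pairRatio k (1 - 2 * d))

theorem pairRate_one_sub (k : ℕ) (d : ℝ) : pairRate k (1 - d) = pairRate k d := by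
  rw [pairRate, pairRate, binEntropy_one_sub, ← pairRatio_abs k (1 - 2 * d),
    ← pairRatio_abs k (1 - 2 * (1 - d)), abs_sub_comm]
  ring_nf

theorem continuous_pairRate (k : ℕ) : Continuous (pairRate k) := by
  have hratio : Continuous fun d : ℝ => pairRatio k (1 - 2 * d) := by
    unfold pairRatio evenPart
    fun_prop
  have hlog := hratio.log fun d => (zero_lt_one.trans_le (one_le_pairRatio k (1 - 2 * d))).ne'
  unfold pairRate
  fun_prop

theorem choose_mul_pairRatio_pow_le {k N s a : ℕ} (hN : N ≠ 0) (hs : s ≤ threshold k * N)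
    (ha : a ≤ N) :
    N.choose a * pairRatio k (1 - 2 * (a / N)) ^ s ≤
      2 ^ N * exp (-(N * pairRate k (a / N))) := by
  have hone := one_le_pairRatio k (1 - 2 * ((a : ℝ) / N))
  have hpos := zero_lt_one.trans_le hone
  calc N.choose a * pairRatio k (1 - 2 * (a / N)) ^ s
      = N.choose a * exp (s * log (pairRatio k (1 - 2 * (a / N)))) := by
        rw [exp_nat_mul, exp_log hpos]
    _ ≤ exp (N * binEntropy (a / N)) *
          exp (threshold k * N * log (pairRatio k (1 - 2 * (a / N)))) := by
        gcongr
        · exact choose_le_exp_binEntropy hN ha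
        · exact log_nonneg hone
    _ = exp (N * log 2) * exp (-(N * pairRate k (a / N))) := by
        rw [← exp_add, ← exp_add, pairRate]; ring_nf
    _ = 2 ^ N * exp (-(N * pairRate k (a / N))) := by rw [exp_nat_mul, exp_log two_pos]

theorem neg_log_one_sub_le {q : ℝ} (hq₀ : 0 ≤ q) (hq : q ≤ 1 / 2) :
    -log (1 - q) ≤ q + q ^ 2 / 2 + 2 * q ^ 3 := by
  have hseries := abs_log_sub_add_sum_range_le (x := q) (by rw [abs_of_nonneg hq₀]; linarith) 2
  have hremainder : q ^ 3 / (1 - q) ≤ 2 * q ^ 3 := by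
    rw [div_le_iff₀ (by linarith)]
    nlinarith [pow_nonneg hq₀ 3]
  rw [abs_of_nonneg hq₀] at hseries
  norm_num [sum_range_succ] at hseries
  linarith [(abs_le.1 hseries).1]

theorem log_pairRatio_le {k : ℕ} (hk : 4 ≤ k) {d : ℝ} (hd₀ : 0 ≤ d) (hd₁ : d ≤ 1) :
    log (pairRatio k (1 - 2 * d)) ≤
      monoProb k * ((1 - d) ^ k + d ^ k) + monoProb k ^ 2 / 2 + 2 * monoProb k ^ 3 := by
  have hA : (1 - d) ^ k + d ^ k ≤ 1 := by
    simpa using pow_add_pow_le (sub_nonneg.2 hd₁) hd₀ (by omega : k ≠ 0)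
  have hA₀ : 0 ≤ (1 - d) ^ k + d ^ k :=
    add_nonneg (pow_nonneg (sub_nonneg.2 hd₁) k) (pow_nonneg hd₀ k)
  rw [pairRatio, div_pow]
  have hE := monoProb_mul_evenPart k d
  set A := (1 - d) ^ k + d ^ k
  set q := monoProb k
  have hq : 0 < q := monoProb_pos k
  have hq' : q ≤ 1 / 8 := monoProb_le_eighth hk
  have hy : q * (1 - A) / (1 - q) ≤ 1 / 2 := by
    rw [div_le_iff₀ (by linarith)]
    nlinarith
  have hy' : q * (1 - A) ≤ q * (1 - A) / (1 - q) :=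
    le_div_self (mul_nonneg hq.le (by linarith)) (by linarith) (by linarith)
  have hfactor : 1 + q ^ 2 / (1 - q) ^ 2 * (evenPart k (1 - 2 * d) - 1) =
      (1 - q * (1 - A) / (1 - q)) * (1 - q)⁻¹ := by
    have : 1 - q ≠ 0 := by linarith
    field_simp
    linear_combination q * hE
  rw [hfactor, log_mul (by linarith) (inv_ne_zero (by linarith)), log_inv]
  linarith [neg_log_one_sub_le hq.le (by linarith),
    log_le_sub_one_of_pos (by linarith : 0 < 1 - q * (1 - A) / (1 - q))]

theorem le_pairRate {k : ℕ} (hk : 4 ≤ k) {d : ℝ} (hd₀ : 0 ≤ d) (hd₁ : d ≤ 1) :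
    (1 - ((1 - d) ^ k + d ^ k)) * (log 2 - 2 * monoProb k) + monoProb k * (1 + 1 / k) / 2 -
      2 * monoProb k ^ 2 - d - negMulLog d ≤ pairRate k d := by
  have hA : (1 - d) ^ k + d ^ k ≤ 1 := by
    simpa using pow_add_pow_le (sub_nonneg.2 hd₁) hd₀ (by omega : k ≠ 0)
  have hlog := mul_le_mul_of_nonneg_left (log_pairRatio_le hk hd₀ hd₁)
    (threshold_pos (by omega : 2 ≤ k)).le
  have hentropy := binEntropy_le_add_negMulLog hd₁
  have hthreshold := threshold_mul_monoProb k
  have hinv : 1 / (k : ℝ) ≤ 1 / 4 := by gcongr; exact_mod_cast hk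
  have hinv₀ : 0 ≤ 1 / (k : ℝ) := by positivity
  rw [pairRate]
  set A := (1 - d) ^ k + d ^ k
  set q := monoProb k
  set t := 1 / (k : ℝ)
  have hq : 0 < q := monoProb_pos k
  have hL := log_two_lt_d9
  have hL₀ := log_two_gt_d9
  set L := log 2
  have hproduct : threshold k * (q * A + q ^ 2 / 2 + 2 * q ^ 3) =
      (L - q * (L + 1 + t) / 2) * (A + q / 2 + 2 * q ^ 2) := by
    linear_combination (A + q / 2 + 2 * q ^ 2) * hthreshold
  have hhigher : 0 ≤ q * (L + 1 + t) / 2 * (q / 2 + 2 * q ^ 2) := by positivity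
  have hcube : L * (2 * q ^ 2) ≤ 1 * (2 * q ^ 2) := by gcongr; linarith
  have hlinear : q * (L + 1 + t) / 2 * (1 - A) ≤ 2 * q * (1 - A) :=
    mul_le_mul_of_nonneg_right (by nlinarith) (by linarith)
  linarith

theorem log_le_div_add_nine {x : ℝ} (hx : 0 < x) : log x ≤ x / 10000 + 9 := by
  have hlog : log (10000 : ℝ) ≤ 14 * log 2 := by
    rw [← log_rpow two_pos]
    exact log_le_log (by norm_num) (by norm_num)
  have := log_le_sub_one_of_pos (by positivity : 0 < x / 10000)
  rw [log_div hx.ne' (by norm_num)] at this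
  linarith [log_two_lt_d9]

section Large

variable {k : ℕ} {d : ℝ} (hk : 10000 ≤ k)

include hk

theorem ten_thousand_le_natCast : (10000 : ℝ) ≤ k := by exact_mod_cast hk

theorem monoProb_mul_cube_le : monoProb k * (20000 * (k : ℝ) ^ 3) ≤ 1 := by
  have hk' := ten_thousand_le_natCast hk
  have hpos : (0 : ℝ) < k := by linarith
  have hpow : 40000 * (k : ℝ) ^ 3 ≤ 2 ^ k := by
    rw [← log_le_log_iff (by positivity) (by positivity), log_mul (by norm_num) (by positivity),
      log_pow, log_pow]
    have hconst := log_le_div_add_nine (by norm_num : (0 : ℝ) < 40000)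
    have hcube := log_le_div_add_nine hpos
    norm_num at hconst hcube ⊢
    nlinarith [log_two_gt_d9]
  calc monoProb k * (20000 * (k : ℝ) ^ 3) = 40000 * (k : ℝ) ^ 3 / 2 ^ k := by
        rw [monoProb, one_div, inv_pow]; ring
    _ ≤ 1 := (div_le_one (by positivity)).2 hpow

theorem monoProb_mul_sq_le : monoProb k * (20000 * (k : ℝ) ^ 2) ≤ 1 / k := by
  have := ten_thousand_le_natCast hk
  rw [le_div_iff₀ (by linarith)]
  linarith [monoProb_mul_cube_le hk]

theorem monoProb_mul_natCast_le : monoProb k * k ≤ 1 / 10000 := by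
  have := ten_thousand_le_natCast hk
  have hinv : 1 / (k : ℝ) ≤ 1 / 10000 := by gcongr
  nlinarith [monoProb_mul_sq_le hk, monoProb_pos k]

theorem sq_div_four_le_pairRate (h₀ : 5 / k ≤ d) (h₁ : d ≤ 1 - 5 / k) :
    (1 - 2 * d) ^ 2 / 4 ≤ pairRate k d := by
  have hk' := ten_thousand_le_natCast hk
  have hk0 : (0 : ℝ) < k := by linarith
  have hsmall : 5 / (k : ℝ) ≤ 1 / 2000 := by rw [div_le_div_iff₀ hk0 (by norm_num)]; linarith
  have hsmall₀ : 0 < 5 / (k : ℝ) := by positivity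
  set ρ : ℝ := 1 - 2 * (5 / k) with hρ
  have hρ₀ : 0.999 ≤ ρ := by norm_num; linarith
  have hx : |(1 - 2 * d) / ρ| ≤ 1 := by
    rw [abs_div, abs_of_pos (by linarith : 0 < ρ), div_le_one (by linarith), abs_le]
    constructor <;> linarith
  have hmono : monoProb k * (evenPart k ρ - 1) ≤ 1 / 5 := by
    have hpow := pow_le_of_le_one hsmall₀.le (by linarith) (by omega : k ≠ 0)
    have hinv := one_sub_pow_le_inv k hsmall₀.le (by linarith)
    rw [mul_div_cancel₀ _ hk0.ne'] at hinv
    rw [mul_sub, hρ, monoProb_mul_evenPart]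
    linarith [monoProb_pos k]
  have hevenPart : monoProb k * (evenPart k (1 - 2 * d) - 1) ≤ (1 - 2 * d) ^ 2 / 4 := by
    have := evenPart_mul_sub_one_le k hx ρ
    rw [div_mul_cancel₀ _ (by linarith)] at this
    calc monoProb k * (evenPart k (1 - 2 * d) - 1)
        ≤ monoProb k * (((1 - 2 * d) / ρ) ^ 2 * (evenPart k ρ - 1)) := by
          gcongr; exact (monoProb_pos k).le
      _ = (1 - 2 * d) ^ 2 * (monoProb k * (evenPart k ρ - 1) / ρ ^ 2) := by rw [div_pow]; ring
      _ ≤ (1 - 2 * d) ^ 2 * (1 / 4) := by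
          refine mul_le_mul_of_nonneg_left ?_ (sq_nonneg _)
          rw [div_le_iff₀ (by positivity)]
          nlinarith
      _ = (1 - 2 * d) ^ 2 / 4 := by ring
  rw [pairRate]
  linarith [threshold_mul_log_pairRatio_le (by omega : 4 ≤ k) (1 - 2 * d),
    binEntropy_le_log_two_sub (by linarith) (by linarith : d ≤ 1)]

theorem pairRate_pos_of_mem_Icc (h₀ : 1 / (10 * k) ≤ d) (h₁ : d ≤ 5 / k) : 0 < pairRate k d := by
  have hk' := ten_thousand_le_natCast hk
  have hk0 : (0 : ℝ) < k := by linarith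
  have hsmall : 5 / (k : ℝ) ≤ 1 / 2000 := by rw [div_le_div_iff₀ hk0 (by norm_num)]; linarith
  have hd : 0 < d := lt_of_lt_of_le (by positivity) h₀
  have hA : (1 - d) ^ k + d ^ k ≤ 10 / 11 + 1 / 2000 := by
    have hinv : (1 + k * d)⁻¹ ≤ (11 / 10 : ℝ)⁻¹ := by
      rw [div_le_iff₀ (by positivity)] at h₀
      gcongr
      linarith
    have := one_sub_pow_le_inv k hd.le (by linarith)
    have := pow_le_of_le_one hd.le (by linarith) (by omega : k ≠ 0)
    norm_num at hinv ⊢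
    linarith
  have hentropy : d + negMulLog d ≤ 1 / 100 := by
    have hinv : d⁻¹ ≤ 10 * k := by
      rw [inv_le_comm₀ hd (by positivity), ← one_div]
      exact h₀
    have hlog : log d⁻¹ ≤ k / 1000 + 9 := by
      linarith [log_le_log (by positivity) hinv,
        log_le_div_add_nine (by positivity : 0 < 10 * (k : ℝ))]
    calc d + negMulLog d = d * (1 + log d⁻¹) := by rw [negMulLog, log_inv]; ring
      _ ≤ 5 / k * (1 + (k / 1000 + 9)) := by
          gcongr
          linarith [log_nonneg ((one_le_inv₀ hd).2 (by linarith))]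
      _ = 50 / k + 1 / 200 := by field_simp; ring
      _ ≤ 1 / 100 := by linarith [show 50 / (k : ℝ) = 10 * (5 / k) by ring]
  have hq := monoProb_pos k
  have hq' := monoProb_mul_natCast_le hk
  have hgain : 9 / 100 * (69 / 100) ≤
      (1 - ((1 - d) ^ k + d ^ k)) * (log 2 - 2 * monoProb k) :=
    mul_le_mul (by linarith) (by nlinarith [log_two_gt_d9]) (by norm_num) (by linarith)
  have : 0 < monoProb k * (1 + 1 / k) / 2 := by positivity
  refine lt_of_lt_of_le ?_ (le_pairRate (by omega) hd.le (by linarith))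
  nlinarith

theorem mul_log_sub_le_pairRate (h₀ : 0 ≤ d) (h₁ : k * d ≤ 1 / 10) :
    d * (log (2 ^ k * d) - 1 - 2 * k ^ 2 * d - 2 * (monoProb k * k)) +
      monoProb k / 2 * (1 + 1 / k - 4 * monoProb k) ≤ pairRate k d := by
  have hk' := ten_thousand_le_natCast hk
  have hd : d ≤ 1 := by nlinarith
  have hA : (1 - d) ^ k + d ^ k ≤ 1 - k * d + 2 * (k * d) ^ 2 := by
    have hinv : (1 + k * d)⁻¹ ≤ 1 - k * d + (k * d) ^ 2 := by
      rw [inv_le_iff_one_le_mul₀ (by positivity)]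
      nlinarith [pow_nonneg (by positivity : 0 ≤ k * d) 3]
    have hpow : d ^ k ≤ (k * d) ^ 2 :=
      calc d ^ k ≤ d ^ 2 := pow_le_pow_of_le_one h₀ hd (by omega)
        _ ≤ (k * d) ^ 2 := by gcongr; nlinarith
    linarith [one_sub_pow_le_inv k h₀ hd]
  have hlog : d * log (2 ^ k * d) = d * (k * log 2) - negMulLog d := by
    rcases h₀.eq_or_lt with rfl | hpos
    · simp
    · rw [log_mul (by positivity) hpos.ne', log_pow, negMulLog]
      ring
  have hq := monoProb_pos k
  have hq' := monoProb_mul_natCast_le hk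
  have hgain : (k * d - 2 * (k * d) ^ 2) * (log 2 - 2 * monoProb k) ≤
      (1 - ((1 - d) ^ k + d ^ k)) * (log 2 - 2 * monoProb k) :=
    mul_le_mul_of_nonneg_right (by linarith) (by nlinarith [log_two_gt_d9])
  have hlog_two : 2 * (k * d) ^ 2 * log 2 ≤ 2 * (k * d) ^ 2 * 1 := by
    gcongr; linarith [log_two_lt_d9]
  have hcross : 0 ≤ monoProb k * (k * d) ^ 2 := by positivity
  linarith [le_pairRate (by omega : 4 ≤ k) h₀ hd]

theorem pairRate_pos_of_two_pow_mul_le (h₀ : 0 ≤ d) (h₁ : k * d ≤ 1 / 10)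
    (h : 2 ^ k * d ≤ 100) : 0 < pairRate k d := by
  refine lt_of_lt_of_le ?_ (mul_log_sub_le_pairRate hk h₀ h₁)
  have hk' := ten_thousand_le_natCast hk
  have : 0 < 1 / (k : ℝ) := by positivity
  have hq := monoProb_pos k
  set y := 2 ^ k * d with hy
  have hy₀ : 0 ≤ y := by positivity
  have hd : d = y * (monoProb k / 2) := by
    rw [hy, monoProb, one_div, inv_pow]
    field_simp
  have hentropy : y - 1 ≤ y * log y := by simpa using self_sub_one_le_mul_log hy₀
  have herror : y ^ 2 * (monoProb k * k ^ 2) + 2 * y * (monoProb k * k) + 4 * monoProb k <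
      1 / k := by
    have hsq := monoProb_mul_sq_le hk
    have hone : monoProb k * 1 ≤ monoProb k * (k ^ 2 / 10000) := by gcongr; nlinarith
    have hlin : monoProb k * k ≤ monoProb k * (k ^ 2 / 10000) := by gcongr; nlinarith
    have hy_sq : y ^ 2 * (monoProb k * k ^ 2) ≤ 100 ^ 2 * (monoProb k * k ^ 2) := by gcongr
    have hy_lin : 2 * y * (monoProb k * k) ≤ 2 * 100 * (monoProb k * k) := by gcongr
    linarith
  calc 0 < monoProb k / 2 *
        (1 / k - (y ^ 2 * (monoProb k * k ^ 2) + 2 * y * (monoProb k * k) + 4 * monoProb k)) :=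
        mul_pos (by positivity) (by linarith)
    _ ≤ monoProb k / 2 * (1 / k + (y * log y - (y - 1)) -
          (y ^ 2 * (monoProb k * k ^ 2) + 2 * y * (monoProb k * k) + 4 * monoProb k)) := by
        gcongr; linarith
    _ = _ := by rw [hd]; ring

theorem pairRate_pos_of_le_two_pow_mul (h₀ : 0 ≤ d) (h₁ : k * d ≤ 1 / 10)
    (h : 100 ≤ 2 ^ k * d) : 0 < pairRate k d := by
  refine lt_of_lt_of_le ?_ (mul_log_sub_le_pairRate hk h₀ h₁)
  have hk' := ten_thousand_le_natCast hk
  have hd : 0 < d := pos_of_mul_pos_right (by linarith : 0 < 2 ^ k * d) (by positivity)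
  have hq := monoProb_pos k
  have hqk := monoProb_mul_natCast_le hk
  have hbracket : 0 ≤ log (2 ^ k * d) - 1 - 2 * k ^ 2 * d - 2 * (monoProb k * k) := by
    rcases le_total (k ^ 2 * d) 1 with hsmall | hlarge
    · have hlog : 6 * log 2 ≤ log (2 ^ k * d) := by
        rw [← log_rpow two_pos]
        exact log_le_log (by norm_num) (by norm_num; linarith)
      linarith [log_two_gt_d9]
    · have hlog : 0 ≤ 2 * log k + log d := by
        have := log_nonneg hlarge
        rwa [log_mul (by positivity) hd.ne', log_pow, Nat.cast_ofNat] at this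
      rw [log_mul (by positivity) hd.ne', log_pow]
      nlinarith [log_le_div_add_nine (by linarith : (0 : ℝ) < k), log_two_gt_d9]
  have hinv : 0 < 1 / (k : ℝ) := by positivity
  exact add_pos_of_nonneg_of_pos (mul_nonneg h₀ hbracket)
    (mul_pos (by positivity) (by nlinarith))

theorem pairRate_pos (h₀ : 0 ≤ d) (h₁ : d ≤ 5 / k) : 0 < pairRate k d := by
  have : (0 : ℝ) < k := by linarith [ten_thousand_le_natCast hk]
  rcases le_total (1 / (10 * (k : ℝ))) d with hd | hd
  · exact pairRate_pos_of_mem_Icc hk hd h₁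
  · have hkd : k * d ≤ 1 / 10 := by
      rw [le_div_iff₀ (by positivity)] at hd
      linarith
    rcases le_total (2 ^ k * d) 100 with hy | hy
    · exact pairRate_pos_of_two_pow_mul_le hk h₀ hkd hy
    · exact pairRate_pos_of_le_two_pow_mul hk h₀ hkd hy

theorem exists_min_le_pairRate :
    ∃ η > 0, ∀ d, 0 ≤ d → d ≤ 1 → min ((1 - 2 * d) ^ 2 / 4) η ≤ pairRate k d := by
  have : (0 : ℝ) < k := by linarith [ten_thousand_le_natCast hk]
  obtain ⟨d₀, ⟨hd₀, hd₀'⟩, hmin⟩ := isCompact_Icc.exists_isMinOn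
    (Set.nonempty_Icc.2 (by positivity : 0 ≤ 5 / (k : ℝ))) (continuous_pairRate k).continuousOn
  refine ⟨pairRate k d₀, pairRate_pos hk hd₀ hd₀', fun d h₀ h₁ => ?_⟩
  rcases le_total d (5 / k) with hleft | hleft
  · exact min_le_of_right_le (hmin ⟨h₀, hleft⟩)
  rcases le_total d (1 - 5 / k) with hright | hright
  · exact min_le_of_left_le (sq_div_four_le_pairRate hk hleft hright)
  · rw [← pairRate_one_sub k d]
    exact min_le_of_right_le (hmin ⟨by linarith, by linarith⟩)

end Large

end Rate

section Asymptotics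

open Real

theorem tendsto_pow_mul_exp_neg_mul_atTop (n : ℕ) {b : ℝ} (hb : 0 < b) :
    Tendsto (fun z : ℝ => z ^ n * exp (-(b * z))) atTop (𝓝 0) := by
  simpa using tendsto_rpow_mul_exp_neg_mul_atTop_nhds_zero (n : ℝ) b hb

/-- The value of the bound in `prob_no_balanced_solution_le` for `N = z ^ 4` vertices and `c * N`
edges, with the parameters `r = z ^ (-3 / 2)`, `D = exp (-z / 4)`, `τ = exp (-z / 8)` and
`μ = exp (-z / 64)`. -/
def failureBound (c z : ℝ) : ℝ :=
  c * z ^ 4 * ((z ^ 4 + 1) ^ 2 * exp (-(z / 8)) +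
    exp (-(z / 128)) * exp (10 * c * z ^ 4 * exp (-(3 * z / 32))) +
    25 / 16 * ((z⁻¹) ^ 6 + exp (-(3 * z / 32))))

theorem tendsto_failureBound (c : ℝ) : Tendsto (failureBound c) atTop (𝓝 0) := by
  have hheavy : Tendsto (fun z : ℝ => z ^ 4 * (z ^ 4 + 1) ^ 2 * exp (-(1 / 8 * z)))
      atTop (𝓝 0) := by
    have := ((tendsto_pow_mul_exp_neg_mul_atTop 12 (b := 1 / 8) (by norm_num)).add
      ((tendsto_pow_mul_exp_neg_mul_atTop 8 (b := 1 / 8) (by norm_num)).const_mul 2)).add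
      (tendsto_pow_mul_exp_neg_mul_atTop 4 (b := 1 / 8) (by norm_num))
    simp only [mul_zero, add_zero] at this
    exact this.congr fun z => by ring
  have hθ := tendsto_pow_mul_exp_neg_mul_atTop 4 (b := 3 / 32) (by norm_num)
  have hexp : Tendsto (fun z : ℝ => exp (10 * c * (z ^ 4 * exp (-(3 / 32 * z)))))
      atTop (𝓝 1) := by
    simpa using (hθ.const_mul (10 * c)).rexp
  have hgrowth := (tendsto_pow_mul_exp_neg_mul_atTop 4 (b := 1 / 128) (by norm_num)).mul hexp
  have hcollapse : Tendsto (fun z : ℝ => z⁻¹ ^ 2 + z ^ 4 * exp (-(3 / 32 * z))) atTop (𝓝 0) := by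
    simpa using (tendsto_inv_atTop_zero.pow 2).add hθ
  have hsum := ((hheavy.add hgrowth).add (hcollapse.const_mul (25 / 16))).const_mul c
  simp only [mul_zero, zero_mul, add_zero] at hsum
  refine hsum.congr' ?_
  filter_upwards [eventually_ne_atTop 0] with z hz
  rw [failureBound, show z⁻¹ ^ 2 = z ^ 4 * z⁻¹ ^ 6 by field_simp]
  ring_nf

theorem choose_mul_pairRatio_pow_le_exp_neg {k N s a : ℕ} {η z : ℝ}
    (hη : ∀ d, 0 ≤ d → d ≤ 1 → min ((1 - 2 * d) ^ 2 / 4) η ≤ pairRate k d)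
    (hz : 0 < z) (hzN : z ^ 4 = N) (hηz : z / 4 ≤ N * η) (hs : s ≤ threshold k * N) (ha : a ≤ N)
    (hr : √(z⁻¹ ^ 3) < |1 - 2 * ((a : ℝ) / N)|) :
    N.choose a * pairRatio k (1 - 2 * (a / N)) ^ s ≤ 2 ^ N * exp (-(z / 4)) := by
  have hN : (0 : ℝ) < N := hzN ▸ pow_pos hz 4
  have hd : (a : ℝ) / N ≤ 1 := (div_le_one hN).2 (by exact_mod_cast ha)
  have hsq : z ≤ N * (1 - 2 * ((a : ℝ) / N)) ^ 2 := by
    have : z⁻¹ ^ 3 ≤ (1 - 2 * ((a : ℝ) / N)) ^ 2 := by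
      rw [← sq_abs, ← Real.sq_sqrt (by positivity : 0 ≤ z⁻¹ ^ 3)]
      gcongr
    calc z = N * z⁻¹ ^ 3 := by rw [← hzN]; field_simp
      _ ≤ _ := by gcongr
  have hrate : z / 4 ≤ N * pairRate k (a / N) :=
    calc z / 4 ≤ min (N * ((1 - 2 * ((a : ℝ) / N)) ^ 2 / 4)) (N * η) :=
          le_min (by linarith) hηz
      _ = N * min ((1 - 2 * ((a : ℝ) / N)) ^ 2 / 4) η := (mul_min_of_nonneg _ _ hN.le).symm
      _ ≤ N * pairRate k (a / N) := by gcongr; exact hη _ (by positivity) hd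
  refine (choose_mul_pairRatio_pow_le (by exact_mod_cast hN.ne') hs ha).trans ?_
  gcongr

theorem threshold_mul_pairRatio_sub_one_le {k : ℕ} (hk : 10000 ≤ k) {z : ℝ} (hkz : k ≤ z) :
    threshold k * z ^ 4 * (10 * (pairRatio k (√(z⁻¹ ^ 3)) - 1)) ≤ z / 128 := by
  have hk' := ten_thousand_le_natCast hk
  have hz : 0 < z := by linarith
  have hr : √(z⁻¹ ^ 3) ^ 2 = z⁻¹ ^ 3 := Real.sq_sqrt (by positivity)
  have hkr : |k * √(z⁻¹ ^ 3)| ≤ 1 := by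
    rw [← sq_le_one_iff_abs_le_one, mul_pow, hr]
    calc (k : ℝ) ^ 2 * z⁻¹ ^ 3 ≤ z ^ 2 * z⁻¹ ^ 3 := by gcongr
      _ = z⁻¹ := by field_simp
      _ ≤ 1 := inv_le_one_of_one_le₀ (by linarith)
  have hratio := pairRatio_sub_one_le (by omega : 4 ≤ k) hkr
  rw [mul_pow, hr] at hratio
  calc threshold k * z ^ 4 * (10 * (pairRatio k (√(z⁻¹ ^ 3)) - 1))
      ≤ threshold k * z ^ 4 * (10 * (2 * ((monoProb k * k) ^ 2 * z⁻¹ ^ 3))) := by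
        have := threshold_pos (by omega : 2 ≤ k)
        gcongr
    _ = threshold k * monoProb k * (20 * (monoProb k * k ^ 2)) * z := by field_simp; ring
    _ ≤ 1 * (1 / 128) * z := by
        have := monoProb_pos k
        have := monoProb_mul_sq_le hk
        have : 1 / (k : ℝ) ≤ 1 := by rw [div_le_one (by linarith)]; linarith
        gcongr
        · linarith [threshold_mul_monoProb_le k, log_two_lt_d9]
        · linarith
    _ = z / 128 := by ring

theorem exp_neg_mul_one_add_pow_le {k m : ℕ} (hk : 10000 ≤ k) {z θ : ℝ} (hkz : k ≤ z)
    (hm : m ≤ threshold k * z ^ 4) (hθ : 0 ≤ θ) :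
    exp (-(z / 64)) * (1 + 10 * (pairRatio k (√(z⁻¹ ^ 3)) - 1 + θ)) ^ m ≤
      exp (-(z / 128)) * exp (10 * threshold k * z ^ 4 * θ) := by
  have hvariance := threshold_mul_pairRatio_sub_one_le hk hkz
  have hv := sub_nonneg.2 (one_le_pairRatio k (√(z⁻¹ ^ 3)))
  set v := pairRatio k (√(z⁻¹ ^ 3)) - 1
  calc exp (-(z / 64)) * (1 + 10 * (v + θ)) ^ m
      ≤ exp (-(z / 64)) * exp (10 * (v + θ)) ^ m := by
        gcongr; linarith [add_one_le_exp (10 * (v + θ))]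
    _ = exp (-(z / 64) + m * (10 * (v + θ))) := by rw [← exp_nat_mul, exp_add]
    _ ≤ exp (-(z / 64) + threshold k * z ^ 4 * (10 * (v + θ))) := by gcongr
    _ ≤ exp (-(z / 128) + 10 * threshold k * z ^ 4 * θ) := exp_le_exp.2 (by linarith)
    _ = exp (-(z / 128)) * exp (10 * threshold k * z ^ 4 * θ) := exp_add _ _

theorem prob_no_balanced_solution_le_failureBound {V : Type*} [Fintype V] {k m : ℕ} {η z : ℝ}
    (heven : Even (Fintype.card V)) (hk : 10000 ≤ k)
    (hη : ∀ d, 0 ≤ d → d ≤ 1 → min ((1 - 2 * d) ^ 2 / 4) η ≤ pairRate k d)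
    (hkz : k ≤ z) (hzN : z ^ 4 = Fintype.card V) (hηz : z / 4 ≤ Fintype.card V * η)
    (hm : m ≤ threshold k * Fintype.card V) :
    prob (fun h : Fin m → Fin k → V => ∀ σ ∈ balanced V, ∃ i, ¬ Splits σ (h i)) ≤
      failureBound (threshold k) z := by
  have hz : 0 < z := by linarith [ten_thousand_le_natCast hk]
  have : Nonempty V := by
    rw [← Fintype.card_pos_iff, ← Nat.cast_pos (α := ℝ), ← hzN]
    positivity
  have hθ : exp (-(z / 8)) / exp (-(z / 64)) ^ 2 = exp (-(3 * z / 32)) := by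
    rw [← exp_nat_mul, ← exp_sub]; ring_nf
  have hheavy : exp (-(z / 4)) / exp (-(z / 8)) = exp (-(z / 8)) := by
    rw [← exp_sub]; ring_nf
  have hr : √(z⁻¹ ^ 3) ^ 4 = z⁻¹ ^ 6 := by
    rw [show 4 = 2 * 2 by rfl, pow_mul, Real.sq_sqrt (by positivity), ← pow_mul]
  refine (prob_no_balanced_solution_le (r := √(z⁻¹ ^ 3)) heven (by omega) (exp_pos (-(z / 8)))
    (exp_pos (-(z / 64))) (exp_pos (-(z / 4))).le m fun s hs a ha hra =>
      choose_mul_pairRatio_pow_le_exp_neg hη hz hzN hηz ?_ ha hra).trans ?_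
  · exact le_trans (by exact_mod_cast hs.le) hm
  · rw [← hzN] at hm ⊢
    rw [hθ, mul_div_assoc, hheavy, hr, failureBound]
    refine (mul_le_mul_of_nonneg_left ?_ m.cast_nonneg).trans
      (mul_le_mul_of_nonneg_right hm (by positivity))
    linarith [exp_neg_mul_one_add_pow_le hk hkz hm (exp_pos (-(3 * z / 32))).le]

theorem exists_tendsto_prob_no_balanced_solution_le {k : ℕ} (hk : 10000 ≤ k) :
    ∃ ε : ℕ → ℝ, Tendsto ε atTop (𝓝 0) ∧ ∀ᶠ P : ℕ in atTop, ∀ m : ℕ,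
      m ≤ threshold k * (2 * P : ℕ) →
      prob (fun h : Fin m → Fin k → Fin (2 * P) =>
        ∀ σ ∈ balanced (Fin (2 * P)), ∃ i, ¬ Splits σ (h i)) ≤ ε P := by
  obtain ⟨η, hη₀, hη⟩ := exists_min_le_pairRate hk
  set z : ℕ → ℝ := fun P => ((2 * P : ℕ) : ℝ) ^ (1 / 4 : ℝ) with hz_def
  have hz_tendsto : Tendsto z atTop atTop :=
    (tendsto_rpow_atTop (by norm_num)).comp <|
      tendsto_natCast_atTop_atTop.comp (tendsto_id.const_mul_atTop' two_pos)
  refine ⟨_, (tendsto_failureBound (threshold k)).comp hz_tendsto, ?_⟩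
  filter_upwards [hz_tendsto.eventually_ge_atTop (k : ℝ), hz_tendsto.eventually_ge_atTop η⁻¹]
    with P hkz hηz m hm
  have hzN : z P ^ 4 = (Fintype.card (Fin (2 * P)) : ℝ) := by
    rw [Fintype.card_fin, hz_def, ← rpow_natCast, ← rpow_mul (by positivity)]
    norm_num
  refine prob_no_balanced_solution_le_failureBound (by simp) hk hη hkz hzN ?_ (by simpa using hm)
  have hz₁ : 1 ≤ z P := by linarith [ten_thousand_le_natCast hk]
  calc z P / 4 ≤ z P ^ 3 := by nlinarith [pow_le_pow_right₀ hz₁ (show 1 ≤ 3 by norm_num)]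
    _ = z P ^ 3 * (η⁻¹ * η) := by rw [inv_mul_cancel₀ hη₀.ne', mul_one]
    _ ≤ z P ^ 3 * (z P * η) := by gcongr
    _ = Fintype.card (Fin (2 * P)) * η := by rw [← hzN]; ring

end Asymptotics

section Comparison

open scoped Nat

variable {V : Type*} [DecidableEq V] {k m n N : ℕ}

/-- The hypergraph whose hyperedges are the vertex sets of the tuples `h i`; it has fewer than `m`
edges, or edges of size less than `k`, when there are repetitions. -/
def tupleHypergraph (h : Fin m → Fin k → V) : Finset (Finset V) :=
  univ.image fun i => univ.image (h i)

theorem factorial_le_card_filter_image_eq [Fintype V] {e : Finset V} (he : #e = k) :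
    k ! ≤ #{g : Fin k → V | univ.image g = e} := by
  let f := (e.equivFinOfCardEq he).symm
  have hperm : #(univ : Finset (Equiv.Perm (Fin k))) = k ! := by
    rw [card_univ, Fintype.card_perm, Fintype.card_fin]
  rw [← hperm]
  refine card_le_card_of_injOn (fun π i => (f (π i) : V)) (fun π _ => ?_) fun π _ π' _ h => ?_
  · refine mem_filter.2 ⟨mem_univ _, ?_⟩
    ext v
    simp only [mem_image, mem_univ, true_and]
    exact ⟨fun ⟨i, hi⟩ => hi ▸ (f (π i)).2, fun hv => ⟨π.symm (f.symm ⟨v, hv⟩), by simp⟩⟩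
  · exact Equiv.ext fun i => f.injective (Subtype.ext (congrFun h i))

theorem factorial_mul_factorial_pow_le_card_filter_tupleHypergraph_eq [Fintype V]
    {H : Finset (Finset V)} (hH : #H = m) (huniform : ∀ e ∈ H, #e = k) :
    m ! * k ! ^ m ≤ #{h : Fin m → Fin k → V | tupleHypergraph h = H} := by
  have hfiber : ∀ f : Fin m → Finset V, univ.image f = H →
      k ! ^ m ≤ #{h : Fin m → Fin k → V | tupleHypergraph h = H ∧
        (fun i => univ.image (h i)) = f} := by
    intro f hf
    calc k ! ^ m = ∏ _i : Fin m, k ! := by simp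
      _ ≤ ∏ i : Fin m, #{g : Fin k → V | univ.image g = f i} :=
          prod_le_prod' fun i _ => factorial_le_card_filter_image_eq
            (huniform _ (hf ▸ mem_image_of_mem f (mem_univ i)))
      _ = #(Fintype.piFinset fun i => ({g : Fin k → V | univ.image g = f i} : Finset _)) :=
          (Fintype.card_piFinset _).symm
      _ ≤ _ := card_le_card fun h hh => by
          simp only [Fintype.mem_piFinset, mem_filter, mem_univ, true_and] at hh ⊢
          have : (fun i => univ.image (h i)) = f := funext hh
          exact ⟨by rw [tupleHypergraph, this, hf], this⟩
  calc m ! * k ! ^ m ≤ #{f : Fin m → Finset V | univ.image f = H} * k ! ^ m := by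
        gcongr; exact factorial_le_card_filter_image_eq hH
    _ = ∑ f : Fin m → Finset V with univ.image f = H, k ! ^ m := by
        rw [sum_const, smul_eq_mul]
    _ ≤ ∑ f : Fin m → Finset V with univ.image f = H,
          #{h : Fin m → Fin k → V | tupleHypergraph h = H ∧ (fun i => univ.image (h i)) = f} :=
        sum_le_sum fun f hf => hfiber f (mem_filter.1 hf).2
    _ = #{h : Fin m → Fin k → V | tupleHypergraph h = H} := by
        have hmaps : ∀ h ∈ ({h | tupleHypergraph h = H} : Finset (Fin m → Fin k → V)),
            (fun i => univ.image (h i)) ∈ ({f | univ.image f = H} : Finset (Fin m → Finset V)) :=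
          fun h hh => mem_filter.2 ⟨mem_univ _, (mem_filter.1 hh).2⟩
        simp only [card_eq_sum_card_fiberwise hmaps, filter_filter]

/-- The `k`-uniform hypergraphs on `Fin n` with `m` edges that are not 2-colourable. -/
def badHypergraphs (n k m : ℕ) : Finset (Finset (Finset (Fin n))) :=
  {H | #H = m ∧ (∀ e ∈ H, #e = k) ∧ ¬ IsTwoColorable H}

theorem isTwoColorable_tupleHypergraph {h : Fin m → Fin k → Fin n} {σ : Fin n → Bool}
    (hσ : ∀ i, Splits σ (h i)) : IsTwoColorable (tupleHypergraph h) := by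
  refine ⟨σ, fun e he => ?_⟩
  obtain ⟨i, -, rfl⟩ := mem_image.1 he
  obtain ⟨⟨a, ha⟩, b, hb⟩ := hσ i
  exact ⟨⟨h i a, mem_image_of_mem _ (mem_univ _), ha⟩,
    ⟨h i b, mem_image_of_mem _ (mem_univ _), hb⟩⟩

theorem card_badHypergraphs_mul_le_card_filter (n k m : ℕ) :
    #(badHypergraphs n k m) * (m ! * k ! ^ m) ≤
      #{h : Fin m → Fin k → Fin n | tupleHypergraph h ∈ badHypergraphs n k m} := by
  have hmaps : ∀ h ∈ ({h | tupleHypergraph h ∈ badHypergraphs n k m} :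
      Finset (Fin m → Fin k → Fin n)), tupleHypergraph h ∈ badHypergraphs n k m :=
    fun h hh => (mem_filter.1 hh).2
  rw [card_eq_sum_card_fiberwise hmaps, ← smul_eq_mul, ← sum_const]
  refine sum_le_sum fun H hH => ?_
  obtain ⟨-, hcard, huniform, -⟩ := mem_filter.1 hH
  refine (factorial_mul_factorial_pow_le_card_filter_tupleHypergraph_eq hcard huniform).trans
    (card_le_card fun h hh => ?_)
  simp_all only [mem_filter, mem_univ, true_and]

theorem card_filter_badHypergraphs_le_card_filter (hn : n ≤ N) :
    #{h : Fin m → Fin k → Fin n | tupleHypergraph h ∈ badHypergraphs n k m} ≤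
      #{h : Fin m → Fin k → Fin N | ∀ σ ∈ balanced (Fin N), ∃ i, ¬ Splits σ (h i)} := by
  refine card_le_card_of_injOn (fun h i j => Fin.castLE hn (h i j)) (fun h hh => ?_)
    fun h _ h' _ heq => ?_
  · refine mem_filter.2 ⟨mem_univ _, fun σ _ => ?_⟩
    by_contra! hσ
    exact (mem_filter.1 (mem_filter.1 hh).2).2.2.2
      (isTwoColorable_tupleHypergraph (σ := fun v => σ (Fin.castLE hn v)) hσ)
  · exact funext₂ fun i j => Fin.castLE_injective hn (congrFun₂ heq i j)

theorem card_badHypergraphs_mul_le_prob (hn : n ≤ N) (hN : N ≠ 0) :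
    (#(badHypergraphs n k m) : ℝ) * (m ! * k ! ^ m) ≤
      prob (fun h : Fin m → Fin k → Fin N => ∀ σ ∈ balanced (Fin N), ∃ i, ¬ Splits σ (h i)) *
        ((N : ℝ) ^ k) ^ m := by
  have hprob : prob (fun h : Fin m → Fin k → Fin N =>
      ∀ σ ∈ balanced (Fin N), ∃ i, ¬ Splits σ (h i)) * ((N : ℝ) ^ k) ^ m =
      #{h : Fin m → Fin k → Fin N | ∀ σ ∈ balanced (Fin N), ∃ i, ¬ Splits σ (h i)} := by
    rw [prob_eq_card_div]
    simp only [Fintype.card_fun, Fintype.card_fin, Nat.cast_pow]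
    field_simp
    congr!
  rw [hprob]
  exact_mod_cast (card_badHypergraphs_mul_le_card_filter n k m).trans
    (card_filter_badHypergraphs_le_card_filter hn)

theorem card_isTwoColorable_add_card_badHypergraphs (n k m : ℕ) :
    Nat.card {H : Finset (Finset (Fin n)) // #H = m ∧ (∀ e ∈ H, #e = k) ∧ IsTwoColorable H} +
      #(badHypergraphs n k m) = (n.choose k).choose m := by
  have hall : powersetCard m (powersetCard k (univ : Finset (Fin n))) =
      ({H | #H = m ∧ ∀ e ∈ H, #e = k} : Finset (Finset (Finset (Fin n)))) := by
    ext H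
    simp only [mem_powersetCard, mem_filter, mem_univ, true_and, subset_iff, implies_true]
    exact and_comm
  have hcard : #(powersetCard m (powersetCard k (univ : Finset (Fin n)))) =
      (n.choose k).choose m := by simp
  rw [← hcard, hall, Nat.card_eq_fintype_card, Fintype.card_subtype, badHypergraphs,
    ← card_filter_add_card_filter_not (s := ({H | #H = m ∧ ∀ e ∈ H, #e = k} :
      Finset (Finset (Finset (Fin n))))) IsTwoColorable]
  simp only [filter_filter, and_assoc]

theorem sub_pow_le_factorial_mul_choose {M j : ℕ} (hj : j ≤ M) :
    ((M : ℝ) + 1 - j) ^ j ≤ j ! * M.choose j := by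
  have := Nat.pow_sub_le_descFactorial M j
  rw [Nat.descFactorial_eq_factorial_mul_choose, ← Nat.cast_le (α := ℝ)] at this
  simpa [Nat.cast_sub (show j ≤ M + 1 by omega)] using this

theorem exp_neg_two_mul_le_one_sub {x : ℝ} (hx₀ : 0 ≤ x) (hx : x ≤ 1 / 2) :
    Real.exp (-(2 * x)) ≤ 1 - x := by
  rw [Real.exp_neg, inv_le_comm₀ (Real.exp_pos _) (by linarith)]
  refine le_trans ?_ (Real.add_one_le_exp (2 * x))
  rw [inv_le_iff_one_le_mul₀ (by linarith)]
  nlinarith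

theorem pow_mul_one_sub_le_factorial_mul_choose (hkn : k ≤ n) (hn : n ≤ N) (hN : N ≤ n + 1)
    (hN₀ : N ≠ 0) : (N : ℝ) ^ k * (1 - (k : ℝ) ^ 2 / N) ≤ k ! * n.choose k := by
  have hN' : (N : ℝ) ≤ n + 1 := by exact_mod_cast hN
  have hkN : (k : ℝ) ≤ N := by exact_mod_cast hkn.trans hn
  have hpos : (0 : ℝ) < N := by positivity
  have hle : (k : ℝ) / N ≤ 1 := (div_le_one hpos).2 hkN
  calc (N : ℝ) ^ k * (1 - (k : ℝ) ^ 2 / N) = (N : ℝ) ^ k * (1 + k * -((k : ℝ) / N)) := by ring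
    _ ≤ (N : ℝ) ^ k * (1 + -((k : ℝ) / N)) ^ k := by
        gcongr; exact one_add_mul_le_pow (by linarith) k
    _ = ((N : ℝ) - k) ^ k := by rw [← sub_eq_add_neg, ← mul_pow]; field_simp
    _ ≤ ((n : ℝ) + 1 - k) ^ k := by gcongr
    _ ≤ k ! * n.choose k := sub_pow_le_factorial_mul_choose hkn

theorem pow_mul_one_sub_le_factorial_mul_choose_sub (hk : 2 ≤ k) (hkn : k ≤ n) (hn : n ≤ N)
    (hN : N ≤ n + 1) {c : ℝ} (hm : m ≤ c * N) :
    (N : ℝ) ^ k * (1 - (k ^ 2 + k ! * c) / N) ≤ k ! * ((n.choose k : ℝ) - m) := by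
  have hN₁ : (1 : ℝ) ≤ N := by exact_mod_cast (by omega : 1 ≤ N)
  have hc : 0 ≤ c := nonneg_of_mul_nonneg_left (m.cast_nonneg.trans hm) (by linarith)
  have hedges : (k ! : ℝ) * m ≤ (N : ℝ) ^ k * (k ! * c / N) :=
    calc (k ! : ℝ) * m ≤ k ! * (c * N) := by gcongr
      _ = (N : ℝ) ^ 2 * (k ! * c / N) := by field_simp
      _ ≤ (N : ℝ) ^ k * (k ! * c / N) := by gcongr
  rw [add_div]
  linarith [pow_mul_one_sub_le_factorial_mul_choose hkn hn hN (by omega)]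

theorem exp_neg_le_one_sub_div_pow {K c : ℝ} (hK : 0 ≤ K) (hN : N ≠ 0) (hKN : 2 * K ≤ N)
    (hm : m ≤ c * N) : Real.exp (-(2 * K * c)) ≤ (1 - K / N) ^ m := by
  have hN₀ : (0 : ℝ) < N := by positivity
  calc Real.exp (-(2 * K * c)) = Real.exp (-(c * N * (2 * (K / N)))) := by congr 1; field_simp
    _ ≤ Real.exp (-(m * (2 * (K / N)))) := by gcongr
    _ = Real.exp (-(2 * (K / N))) ^ m := by rw [← Real.exp_nat_mul, mul_neg]
    _ ≤ (1 - K / N) ^ m := by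
        gcongr
        exact exp_neg_two_mul_le_one_sub (by positivity) (by rw [div_le_iff₀ hN₀]; linarith)

theorem exp_neg_mul_pow_le_choose_mul (hk : 2 ≤ k) (hkn : k ≤ n) (hn : n ≤ N) (hN : N ≤ n + 1)
    {c : ℝ} (hm : m ≤ c * N) (hlarge : 2 * ((k : ℝ) ^ 2 + k ! * c) ≤ N) :
    Real.exp (-(2 * (k ^ 2 + k ! * c) * c)) * ((N : ℝ) ^ k) ^ m ≤
      ((n.choose k).choose m : ℝ) * (m ! * k ! ^ m) := by
  have hN₀ : N ≠ 0 := by omega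
  have hc : 0 ≤ c := nonneg_of_mul_nonneg_left (m.cast_nonneg.trans hm) (by positivity)
  have hbase := pow_mul_one_sub_le_factorial_mul_choose_sub hk hkn hn hN hm
  have hfrac : 0 ≤ 1 - (k ^ 2 + k ! * c) / N := by
    rw [sub_nonneg, div_le_one (by positivity)]
    linarith [show 0 ≤ (k : ℝ) ^ 2 + k ! * c by positivity]
  have hnonneg : 0 ≤ (N : ℝ) ^ k * (1 - (k ^ 2 + k ! * c) / N) := by positivity
  have hmM : 0 ≤ (n.choose k : ℝ) - m :=
    nonneg_of_mul_nonneg_right (hnonneg.trans hbase) (by positivity)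
  calc Real.exp (-(2 * (k ^ 2 + k ! * c) * c)) * ((N : ℝ) ^ k) ^ m
      ≤ (1 - (k ^ 2 + k ! * c) / N) ^ m * ((N : ℝ) ^ k) ^ m := by
        gcongr; exact exp_neg_le_one_sub_div_pow (by positivity) hN₀ hlarge hm
    _ = ((N : ℝ) ^ k * (1 - (k ^ 2 + k ! * c) / N)) ^ m := by rw [mul_pow, mul_comm]
    _ ≤ (k ! * ((n.choose k : ℝ) - m)) ^ m := by gcongr
    _ = k ! ^ m * ((n.choose k : ℝ) - m) ^ m := mul_pow _ _ _
    _ ≤ k ! ^ m * ((n.choose k : ℝ) + 1 - m) ^ m := by gcongr; linarith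
    _ ≤ k ! ^ m * (m ! * (n.choose k).choose m) := by
        gcongr
        exact sub_pow_le_factorial_mul_choose (by exact_mod_cast sub_nonneg.1 hmM)
    _ = ((n.choose k).choose m : ℝ) * (m ! * k ! ^ m) := by ring

theorem exp_neg_mul_card_badHypergraphs_le (hk : 2 ≤ k) (hkn : k ≤ n) (hn : n ≤ N)
    (hN : N ≤ n + 1) {c : ℝ} (hm : m ≤ c * N) (hlarge : 2 * ((k : ℝ) ^ 2 + k ! * c) ≤ N) :
    Real.exp (-(2 * (k ^ 2 + k ! * c) * c)) * #(badHypergraphs n k m) ≤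
      prob (fun h : Fin m → Fin k → Fin N => ∀ σ ∈ balanced (Fin N), ∃ i, ¬ Splits σ (h i)) *
        (n.choose k).choose m := by
  set p := prob fun h : Fin m → Fin k → Fin N => ∀ σ ∈ balanced (Fin N), ∃ i, ¬ Splits σ (h i)
  set κ := Real.exp (-(2 * (k ^ 2 + k ! * c) * c))
  refine le_of_mul_le_mul_right ?_ (by positivity : 0 < (m ! * k ! ^ m : ℝ))
  calc κ * #(badHypergraphs n k m) * (m ! * k ! ^ m)
      = κ * (#(badHypergraphs n k m) * (m ! * k ! ^ m)) := mul_assoc _ _ _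
    _ ≤ κ * (p * ((N : ℝ) ^ k) ^ m) :=
        mul_le_mul_of_nonneg_left (card_badHypergraphs_mul_le_prob hn (by omega))
          (Real.exp_pos _).le
    _ = p * (κ * ((N : ℝ) ^ k) ^ m) := by ring
    _ ≤ p * ((n.choose k).choose m * (m ! * k ! ^ m)) :=
        mul_le_mul_of_nonneg_left (exp_neg_mul_pow_le_choose_mul hk hkn hn hN hm hlarge)
          (prob_nonneg _)
    _ = p * (n.choose k).choose m * (m ! * k ! ^ m) := (mul_assoc _ _ _).symm

theorem eventually_choose_floor_pos (hk : 2 ≤ k) {c : ℝ} (hc : 0 < c) :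
    ∀ᶠ n : ℕ in atTop, 0 < ((n.choose k).choose ⌊c * (n : ℝ)⌋₊ : ℝ) := by
  filter_upwards [eventually_ge_atTop k,
    tendsto_natCast_atTop_atTop.eventually_ge_atTop (2 * ((k : ℝ) ^ 2 + k ! * c))] with n hkn hn
  have hn₀ : 0 < n := by omega
  set m := ⌊c * (n : ℝ)⌋₊
  refine pos_of_mul_pos_left (b := (m ! * k ! ^ m : ℝ)) ?_ (by positivity)
  exact lt_of_lt_of_le (by positivity) (exp_neg_mul_pow_le_choose_mul hk hkn le_rfl
    n.le_succ (Nat.floor_le (by positivity)) hn)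

theorem tendsto_card_badHypergraphs_div (hk : 10000 ≤ k) {c : ℝ} (hc₀ : 0 < c)
    (hc : c ≤ threshold k) :
    Tendsto (fun n : ℕ => (#(badHypergraphs n k ⌊c * (n : ℝ)⌋₊) : ℝ) /
      (n.choose k).choose ⌊c * (n : ℝ)⌋₊) atTop (𝓝 0) := by
  obtain ⟨ε, hε, hprob⟩ := exists_tendsto_prob_no_balanced_solution_le hk
  have hhalf : Tendsto (fun n : ℕ => (n + 1) / 2) atTop atTop :=
    tendsto_atTop_atTop.2 fun b => ⟨2 * b, fun n hn => by omega⟩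
  set κ := Real.exp (-(2 * (k ^ 2 + k ! * c) * c))
  have hκ₀ : 0 < κ := Real.exp_pos _
  have hbound : Tendsto (fun n : ℕ => ε ((n + 1) / 2) / κ) atTop (𝓝 0) := by
    simpa using (hε.comp hhalf).div_const κ
  refine squeeze_zero' (Eventually.of_forall fun n => by positivity) ?_ hbound
  filter_upwards [hhalf.eventually hprob, eventually_ge_atTop k,
    eventually_choose_floor_pos (by omega : 2 ≤ k) hc₀,
    tendsto_natCast_atTop_atTop.eventually_ge_atTop (2 * ((k : ℝ) ^ 2 + k ! * c))]
    with n hp hkn hchoose hlarge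
  have hnN : (n : ℝ) ≤ (2 * ((n + 1) / 2) : ℕ) := by exact_mod_cast (by omega)
  have hm : (⌊c * (n : ℝ)⌋₊ : ℝ) ≤ c * (2 * ((n + 1) / 2) : ℕ) :=
    (Nat.floor_le (by positivity)).trans (by gcongr)
  rw [div_le_div_iff₀ hchoose hκ₀, mul_comm _ κ]
  refine (exp_neg_mul_card_badHypergraphs_le (by omega) hkn (by omega) (by omega) hm
    (hlarge.trans hnN)).trans ?_
  gcongr
  exact hp _ (hm.trans (by gcongr))

theorem tendsto_card_isTwoColorable_div (hk : 10000 ≤ k) {c : ℝ} (hc₀ : 0 < c)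
    (hc : c ≤ threshold k) :
    Tendsto (fun n : ℕ => (Nat.card {H : Finset (Finset (Fin n)) //
        #H = ⌊c * (n : ℝ)⌋₊ ∧ (∀ e ∈ H, #e = k) ∧ IsTwoColorable H} : ℝ) /
      (n.choose k).choose ⌊c * (n : ℝ)⌋₊) atTop (𝓝 1) := by
  have hlim := (tendsto_card_badHypergraphs_div hk hc₀ hc).const_sub 1
  rw [sub_zero] at hlim
  refine hlim.congr' ?_
  filter_upwards [eventually_choose_floor_pos (by omega : 2 ≤ k) hc₀] with n hchoose
  rw [eq_div_iff hchoose.ne', sub_mul, one_mul, div_mul_cancel₀ _ hchoose.ne',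
    ← card_isTwoColorable_add_card_badHypergraphs, Nat.cast_add, add_sub_cancel_right]

theorem threshold_eq (hk : k ≠ 0) :
    threshold k = 2 ^ (k - 1) * Real.log 2 - Real.log 2 / 2 - (1 + 1 / (k : ℝ)) / 2 := by
  obtain ⟨j, rfl⟩ := Nat.exists_eq_succ_of_ne_zero hk
  rw [threshold, monoProb, one_div, inv_pow, Nat.succ_sub_one, pow_succ']
  field_simp

end Comparison

end

end HypergraphColoring

/-- There is a sequence `t k → 0` such that for all `k ≥ 3` and
`0 < c < 2^(k-1) ln 2 - (ln 2)/2 - (1 + t k)/2`, the probability that a uniformly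
random `k`-uniform hypergraph with `⌊cn⌋` hyperedges is 2-colorable tends to `1`. -/
theorem hypergraph_colorable_whp :
    ∃ t : ℕ → ℝ, Filter.Tendsto t Filter.atTop (nhds 0) ∧
      ∀ k : ℕ, 3 ≤ k → ∀ c : ℝ, 0 < c →
        c < 2 ^ (k - 1) * Real.log 2 - Real.log 2 / 2 - (1 + t k) / 2 →
        Filter.Tendsto
          (fun n : ℕ =>
            (Nat.card {H : Finset (Finset (Fin n)) //
                H.card = ⌊c * (n : ℝ)⌋₊ ∧ (∀ e ∈ H, e.card = k) ∧ IsTwoColorable H} : ℝ) /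
              (Nat.choose (Nat.choose n k) ⌊c * (n : ℝ)⌋₊ : ℝ))
          Filter.atTop (nhds 1) := by
  -- For `k < 10000` the value `2 * 2 ^ k` leaves no admissible `c`.
  refine ⟨fun k => if 10000 ≤ k then 1 / (k : ℝ) else 2 * 2 ^ k, ?_, fun k hk c hc₀ hc => ?_⟩
  · refine tendsto_one_div_atTop_nhds_zero_nat.congr' ?_
    filter_upwards [Filter.eventually_ge_atTop 10000] with k hk
    rw [if_pos hk]
  · by_cases hlarge : 10000 ≤ k
    · simp only [if_pos hlarge, ← HypergraphColoring.threshold_eq (by omega : k ≠ 0)] at hc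
      exact HypergraphColoring.tendsto_card_isTwoColorable_div hlarge hc₀ hc.le
    · simp only [if_neg hlarge] at hc
      have hpow : (2 : ℝ) ^ (k - 1) * Real.log 2 ≤ 2 ^ k * 1 := by
        gcongr
        · norm_num
        · omega
        · linarith [Real.log_two_lt_d9]
      linarith [Real.log_two_gt_d9]
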